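/- arXiv:1710.07183 — 2 statements merged into one kernel-verified Lean document; each statement's English description precedes it below -/
import Mathlib

section
/- Let θ be a sentence in the first-order language of rings and let p be a prime. Then there exist natural numbers N > 0 and B ≥ 1 such that for all e ≥ B, the finite field with p^e elements satisfies θ if and only if the finite field with p^{e+N} elements satisfies θ. -/
open FirstOrder

attribute [local instance] FirstOrder.Ring.compatibleRingOfRing

/-!
If no period works, then `N = k!` and `B = k + 1` fail at some exponent `e k ≥ k + 1`, for
every `k`. By Łoś's theorem the fields of `p ^ e k` and of `p ^ (e k + k!)` elements have as
ultraproducts the fixed fields of two nonstandard Frobenius maps `σ` and `σ'` on an ultrapower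
`K` of the algebraic closure of `𝔽_p`. These fixed fields are told apart by `θ`; but
`e k ≡ e k + k!` modulo every `n` for large `k`, so `σ` and `σ'` agree on the algebraic closure
of `𝔽_p`.

The fixed fields are nevertheless elementarily equivalent, by a back-and-forth along
isomorphisms between countable algebraically closed subfields of `K` that carry `σ` to `σ'`. To
extend one of them, defined on `A`, to a transcendental `a` fixed by `σ`, realise a finite Galois
extension `E` of `A(a)` as the function field of a plane curve, on which `σ` acts by a twist
from `Gal(E / A(a))`. For a curve of degree `d` over a large finite field of order `q`,
Stepanov's method bounds the points belonging to each of the `d` twists by `q + o(q)`, and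
together these points number about `d q`; so every twist has a point. A nonstandard finite field
inherits this, and the saturation of `K` assembles the finite extensions.
-/

namespace FiniteFieldPeriodicity

open Filter Module Polynomial

open scoped Polynomial.Bivariate

/-! ### Filtrations of linear growth and Stepanov's bound -/

/-- A filtration of an `F`-algebra by finite-dimensional subspaces whose dimensions agree with
those of the Riemann–Roch spaces of a divisor of degree `d` on a curve, up to the error `c`. -/
structure IsLinearGrowthFiltration {F R : Type*} [Field F] [CommRing R] [Algebra F R]
    (W : ℕ → Submodule F R) (d c : ℕ) : Prop where
  mono : Monotone W
  one_mem : 1 ∈ W 0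
  mul_mem : ∀ {m n : ℕ} {a b : R}, a ∈ W m → b ∈ W n → a * b ∈ W (m + n)
  exists_mem : ∀ r, ∃ m, r ∈ W m
  finite : ∀ m, Module.Finite F (W m)
  finrank_le : ∀ m, finrank F (W m) ≤ d * (m + 1)
  le_finrank : ∀ m, d * (m + 1) ≤ finrank F (W m) + c

namespace IsLinearGrowthFiltration

variable {F R : Type*} [Field F] [CommRing R] [Algebra F R] {W : ℕ → Submodule F R} {d c : ℕ}

lemma pow_mem (hW : IsLinearGrowthFiltration W d c) {m : ℕ} {a : R} (ha : a ∈ W m) (n : ℕ) :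
    a ^ n ∈ W (n * m) := by
  induction n with
  | zero => simpa using hW.one_mem
  | succ n ih => rw [pow_succ, add_mul, one_mul]; exact hW.mul_mem ih ha

lemma exists_forall_mem (hW : IsLinearGrowthFiltration W d c) {ι : Type*} [Finite ι] (g : ι → R) :
    ∃ M, ∀ i, g i ∈ W M := by
  choose m hm using fun i => hW.exists_mem (g i)
  obtain ⟨M, hM⟩ := (Set.finite_range m).bddAbove
  exact ⟨M, fun i => hW.mono (hM ⟨i, rfl⟩) (hm i)⟩

lemma finrank_map_mkQ_le [IsDomain R] (hW : IsLinearGrowthFiltration W d c) {r : R} {w : ℕ}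
    (hr : r ∈ W w) (hr0 : r ≠ 0) (M : ℕ) :
    finrank F ((W (M + w)).map (Ideal.Quotient.mkₐ F (Ideal.span {r})).toLinearMap)
      ≤ d * w + c := by
  have := hW.finite (M + w)
  let L := (Ideal.Quotient.mkₐ F (Ideal.span {r})).toLinearMap.domRestrict (W (M + w))
  have hmul (s : W M) : r * s ∈ W (M + w) := add_comm w M ▸ hW.mul_mem hr s.2
  let mulLeft : W M →ₗ[F] LinearMap.ker L :=
    ((LinearMap.mulLeft F r).restrict fun s hs => hmul ⟨s, hs⟩).codRestrict _ fun s =>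
      LinearMap.mem_ker.2 <| Ideal.Quotient.eq_zero_iff_mem.2 <|
        Ideal.mul_mem_right _ _ (Ideal.mem_span_singleton_self r)
  have hinj : Function.Injective mulLeft := fun s t hst => by
    have : r * (s : R) = r * t := congrArg (fun z : LinearMap.ker L => ((z : W (M + w)) : R)) hst
    exact Subtype.ext (mul_left_cancel₀ hr0 this)
  have hker := LinearMap.finrank_le_finrank_of_injective hinj
  have hrank := LinearMap.finrank_range_add_finrank_ker L
  rw [LinearMap.range_domRestrict] at hrank
  have hupper := hW.finrank_le (M + w)
  have hlower := hW.le_finrank M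
  have : d * (M + w + 1) = d * (M + 1) + d * w := by ring
  omega

lemma rank_quotient_span_singleton_le [IsDomain R] (hW : IsLinearGrowthFiltration W d c) {r : R}
    {w : ℕ} (hr : r ∈ W w) (hr0 : r ≠ 0) :
    Module.rank F (R ⧸ Ideal.span {r}) ≤ (d * w + c : ℕ) := by
  refine rank_le fun s hs => ?_
  choose g hg using Ideal.Quotient.mkₐ_surjective F (Ideal.span {r})
  obtain ⟨M, hM⟩ := hW.exists_forall_mem fun i : s => g i
  refine le_trans ?_ (hW.finrank_map_mkQ_le hr hr0 M)
  have := hW.finite (M + w)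
  have hspan : Submodule.span F (Set.range fun i : s => (i : R ⧸ Ideal.span {r})) ≤
      (W (M + w)).map (Ideal.Quotient.mkₐ F (Ideal.span {r})).toLinearMap := by
    rw [Submodule.span_le]
    rintro _ ⟨i, rfl⟩
    exact ⟨g i, hW.mono (Nat.le_add_right _ _) (hM i), hg i⟩
  simpa [finrank_span_eq_card hs] using Submodule.finrank_mono hspan

lemma finite_quotient_span_singleton [IsDomain R] (hW : IsLinearGrowthFiltration W d c) {r : R}
    (hr0 : r ≠ 0) : Module.Finite F (R ⧸ Ideal.span {r}) := by
  obtain ⟨w, hw⟩ := hW.exists_mem r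
  exact Module.rank_lt_aleph0_iff.1
    ((hW.rank_quotient_span_singleton_le hw hr0).trans_lt (Cardinal.natCast_lt_aleph0))

lemma finrank_quotient_span_singleton_le [IsDomain R] (hW : IsLinearGrowthFiltration W d c) {r : R}
    {w : ℕ} (hr : r ∈ W w) (hr0 : r ≠ 0) : finrank F (R ⧸ Ideal.span {r}) ≤ d * w + c :=
  finrank_le_of_rank_le (hW.rank_quotient_span_singleton_le hr hr0)

lemma card_zeros_le [IsDomain R] (hW : IsLinearGrowthFiltration W d c) {r : R} {w : ℕ}
    (hr : r ∈ W w) (hr0 : r ≠ 0) (P : Finset (R →ₐ[F] F)) (hP : ∀ φ ∈ P, φ r = 0) :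
    P.card ≤ d * w + c := by
  have := hW.finite_quotient_span_singleton hr0
  have hker (φ : P) : ∀ a ∈ Ideal.span {r}, φ.1 a = 0 := fun a ha => by
    obtain ⟨b, rfl⟩ := Ideal.mem_span_singleton'.1 ha
    rw [map_mul, hP _ φ.2, mul_zero]
  let lift (φ : P) : (R ⧸ Ideal.span {r}) →ₐ[F] F := Ideal.Quotient.liftₐ _ φ.1 (hker φ)
  have hlift : Function.Injective lift := fun φ χ h =>
    Subtype.ext (AlgHom.ext fun s => DFunLike.congr_fun h (Ideal.Quotient.mk _ s))
  calc P.card = Nat.card P := by simp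
    _ ≤ Nat.card ((R ⧸ Ideal.span {r}) →ₐ[F] F) := Nat.card_le_card_of_injective _ hlift
    _ ≤ finrank F (R ⧸ Ideal.span {r}) := card_algHom_le_finrank F _ F
    _ ≤ d * w + c := hW.finrank_quotient_span_singleton_le hr hr0

lemma le_of_X_pow_dvd [IsDomain R] (hW : IsLinearGrowthFiltration W d c)
    (ψ : R →ₐ[F] PowerSeries F) {t : R} (ht : ψ t = PowerSeries.X) {r : R} {w : ℕ}
    (hr : r ∈ W w) (hr0 : r ≠ 0) {n : ℕ} (hn : PowerSeries.X ^ n ∣ ψ r) : n ≤ d * w + c := by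
  have := hW.finite_quotient_span_singleton hr0
  have hli : LinearIndependent F
      fun i : Fin n => (Ideal.Quotient.mk (Ideal.span {r}) (t ^ (i : ℕ))) := by
    refine Fintype.linearIndependent_iff.2 fun γ hγ i => ?_
    have hmem : ∑ i, γ i • t ^ (i : ℕ) ∈ Ideal.span {r} := by
      rw [← Ideal.Quotient.eq_zero_iff_mem, ← hγ, map_sum]
      rfl
    obtain ⟨s, hs⟩ := Ideal.mem_span_singleton.1 hmem
    have hdvd : PowerSeries.X ^ n ∣ ∑ i, γ i • (PowerSeries.X : PowerSeries F) ^ (i : ℕ) := by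
      have := congrArg ψ hs
      simp only [map_sum, map_smul, map_pow, ht, map_mul] at this
      exact this ▸ hn.mul_right _
    simpa [PowerSeries.coeff_X_pow, Fin.val_inj] using PowerSeries.X_pow_dvd_iff.1 hdvd i i.2
  simpa using hli.fintype_card_le_finrank.trans (hW.finrank_quotient_span_singleton_le hr hr0)

lemma powerSeries_injective [IsDomain R] (hW : IsLinearGrowthFiltration W d c)
    (ψ : R →ₐ[F] PowerSeries F) {t : R} (ht : ψ t = PowerSeries.X) : Function.Injective ψ := by
  refine (injective_iff_map_eq_zero ψ).2 fun s hs => by_contra fun hs0 => ?_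
  obtain ⟨w, hw⟩ := hW.exists_mem s
  have := hW.le_of_X_pow_dvd ψ ht hw hs0 (n := d * w + c + 1) (hs ▸ dvd_zero _)
  omega

end IsLinearGrowthFiltration

/-- Infinite descent: the constant terms of the `U i` vanish, and dividing every `U i` by `X` gives
another solution. -/
lemma powerSeries_eq_zero_of_sum_mul_pow_eq_zero {F : Type*}
    [Field F] {p : ℕ} [ExpChar F p] (k : ℕ) {ι : Type*} [Fintype ι] (E U : ι → PowerSeries F)
    (hE : ∀ γ : ι → F, PowerSeries.X ^ (p ^ k) ∣ ∑ i, γ i • E i → γ = 0)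
    (hsum : ∑ i, E i * U i ^ p ^ k = 0) : U = 0 := by
  have : ExpChar (PowerSeries F) p :=
    expChar_of_injective_algebraMap (algebraMap F (PowerSeries F)).injective p
  have hdvd (n : ℕ) (i : ι) : PowerSeries.X ^ n ∣ U i := by
    induction n generalizing i with
    | zero => simp
    | succ n ih =>
      choose V hV using ih
      have hsumV : ∑ i, E i * V i ^ p ^ k = 0 := by
        refine (mul_eq_zero.1 ?_).resolve_left
          (pow_ne_zero (p ^ k) (pow_ne_zero n (PowerSeries.X_ne_zero (R := F))))
        rw [← hsum, Finset.mul_sum]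
        exact Finset.sum_congr rfl fun i _ => by rw [hV i]; ring
      have hconst := hE (fun i => PowerSeries.constantCoeff (V i) ^ p ^ k) ?_
      · rw [hV i, pow_succ]
        exact mul_dvd_mul_left _ (PowerSeries.X_dvd_iff.2 (eq_zero_of_pow_eq_zero
          (congrFun hconst i)))
      · have hX (i : ι) : PowerSeries.X ^ p ^ k ∣
            V i ^ p ^ k - PowerSeries.C (PowerSeries.constantCoeff (V i)) ^ p ^ k := by
          rw [← sub_pow_expChar_pow]
          exact pow_dvd_pow_of_dvd (PowerSeries.X_dvd_iff.2 (by simp)) _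
        have := Finset.dvd_sum fun i (_ : i ∈ Finset.univ) => (hX i).mul_left (E i)
        simp only [mul_sub, Finset.sum_sub_distrib, hsumV, zero_sub, dvd_neg] at this
        simpa only [PowerSeries.smul_eq_C_mul, map_pow, mul_comm] using this
  ext i n
  exact PowerSeries.X_pow_dvd_iff.1 (hdvd (n + 1) i) n n.lt_succ_self

namespace IsLinearGrowthFiltration

variable {F R : Type*} [Field F] [CommRing R] [Algebra F R] [IsDomain R]
  {W : ℕ → Submodule F R} {d c : ℕ} {p : ℕ} [ExpChar F p]

lemma eq_zero_of_sum_mul_pow_eq_zero (hW : IsLinearGrowthFiltration W d c)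
    (ψ : R →ₐ[F] PowerSeries F) {t : R} (ht : ψ t = PowerSeries.X) {k l : ℕ}
    (hl : d * l + c < p ^ k) {ι : Type*} [Fintype ι] {b : ι → R} (hb : ∀ i, b i ∈ W l)
    (hli : LinearIndependent F b) {u : ι → R} (hu : ∑ i, b i * u i ^ p ^ k = 0) : u = 0 := by
  refine funext fun i => hW.powerSeries_injective ψ ht ?_
  have := powerSeries_eq_zero_of_sum_mul_pow_eq_zero k (fun i => ψ (b i)) (fun i => ψ (u i))
    (fun γ hγ => ?_) (by simpa using congrArg ψ hu)
  · simpa using congrFun this i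
  · refine funext (Fintype.linearIndependent_iff.1 hli γ (by_contra fun h0 => hl.not_ge ?_))
    exact hW.le_of_X_pow_dvd ψ ht (sum_mem fun i _ => Submodule.smul_mem _ _ (hb i)) h0
      (by simpa using hγ)

/-- The auxiliary function of Stepanov's method: `φ s ↦ φ s ^ p ^ (k + μ)` is assumed to be
represented, up to the factor `φ E`, by elements of `W n`. -/
lemma exists_auxiliary [PerfectRing F p] (hW : IsLinearGrowthFiltration W d c) {k μ l m n : ℕ}
    {ι : Type*} [Fintype ι] {b : ι → R} (hb : ∀ i, b i ∈ W l) (P : Set (R →ₐ[F] F)) (E : R)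
    (hE : ∀ φ ∈ P, φ E ≠ 0)
    (htwist : ∀ s ∈ W m, ∃ t ∈ W n, ∀ φ ∈ P, φ t = φ E * φ s ^ p ^ (k + μ))
    (hcard : d * (p ^ μ * l + n + 1) < Fintype.card ι * finrank F (W m)) :
    ∃ u : ι → R, u ≠ 0 ∧ (∀ i, u i ∈ W m) ∧ ∀ φ ∈ P, φ (∑ i, b i * u i ^ p ^ k) = 0 := by
  have := hW.finite m
  have := hW.finite (p ^ μ * l + n)
  let s := finBasis F (W m)
  choose t htW ht using fun j => htwist (s j) (s j).2
  have hdep : ¬ LinearIndependent F fun ij : ι × Fin (finrank F (W m)) =>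
      (⟨b ij.1 ^ p ^ μ * t ij.2, hW.mul_mem (hW.pow_mem (hb _) _) (htW _)⟩ :
        W (p ^ μ * l + n)) := fun hli => by
    have := hli.fintype_card_le_finrank.trans (hW.finrank_le _)
    simp only [Fintype.card_prod, Fintype.card_fin] at this
    omega
  obtain ⟨a, ha, ij, hij⟩ := Fintype.not_linearIndependent_iff.1 hdep
  let root := (iterateFrobeniusEquiv F p (k + μ)).symm
  have hroot (x : F) : root x ^ p ^ (k + μ) = x := (iterateFrobeniusEquiv F p (k + μ)).right_inv x
  refine ⟨fun i => ∑ j, root (a (i, j)) • (s j : R), fun hu => hij ?_, fun i =>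
    sum_mem fun j _ => Submodule.smul_mem _ _ (s j).2, fun φ hφ => ?_⟩
  · have hu' : ∑ j, root (a (ij.1, j)) • s j = 0 := Subtype.ext (by simpa using congrFun hu ij.1)
    simpa [root] using Fintype.linearIndependent_iff.1 s.linearIndependent _ hu' ij.2
  · have hF (x : F) : (x ^ p ^ k) ^ p ^ μ = x ^ p ^ (k + μ) := by rw [← pow_mul, ← pow_add]
    have hpow : φ E * φ (∑ i, b i * (∑ j, root (a (i, j)) • (s j : R)) ^ p ^ k) ^ p ^ μ =
        φ (∑ ij : ι × Fin _, a ij • (b ij.1 ^ p ^ μ * t ij.2)) := by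
      simp only [map_sum, map_mul, map_pow, map_smul, sum_pow_char_pow, mul_pow, hF, smul_eq_mul,
        hroot, ht _ φ hφ, Finset.mul_sum, Fintype.sum_prod_type]
      exact Finset.sum_congr rfl fun i _ => Finset.sum_congr rfl fun j _ => by ring
    have hzero : ∑ ij : ι × Fin _, a ij • (b ij.1 ^ p ^ μ * t ij.2) = 0 := by
      simpa using congrArg (fun z : W (p ^ μ * l + n) => (z : R)) ha
    rw [hzero, map_zero] at hpow
    exact eq_zero_of_pow_eq_zero ((mul_eq_zero.1 hpow).resolve_left (hE φ hφ))

theorem card_le_of_twist [PerfectRing F p] (hW : IsLinearGrowthFiltration W d c)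
    (ψ : R →ₐ[F] PowerSeries F) {t : R} (ht : ψ t = PowerSeries.X) {k μ l m n : ℕ}
    (hl : d * l + c < p ^ k) (P : Finset (R →ₐ[F] F)) (E : R) (hE : ∀ φ ∈ P, φ E ≠ 0)
    (htwist : ∀ s ∈ W m, ∃ t ∈ W n, ∀ φ ∈ P, φ t = φ E * φ s ^ p ^ (k + μ))
    (hcard : d * (p ^ μ * l + n + 1) < finrank F (W l) * finrank F (W m)) :
    P.card ≤ d * (l + p ^ k * m) + c := by
  have := hW.finite l
  let b := finBasis F (W l)
  obtain ⟨u, hu0, huW, hu⟩ := hW.exists_auxiliary (b := fun i => (b i : R)) (fun i => (b i).2)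
    (P : Set (R →ₐ[F] F)) E hE htwist (by simpa using hcard)
  refine hW.card_zeros_le (sum_mem fun i _ => hW.mul_mem (b i).2 (hW.pow_mem (huW i) _))
    (fun hr => hu0 ?_) P hu
  exact hW.eq_zero_of_sum_mul_pow_eq_zero ψ ht hl (fun i => (b i).2)
    (b.linearIndependent.map' (W l).subtype (Submodule.ker_subtype _)) hr

end IsLinearGrowthFiltration

/-! ### The weight filtration on a plane curve -/

lemma exists_forall_natDegree_coeff_le {R : Type*} [Semiring R] (g : R[X][Y]) :
    ∃ δ, ∀ j, (g.coeff j).natDegree ≤ δ :=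
  ⟨_, fun j => by
    by_cases hj : j ∈ g.support
    · exact Finset.le_sup (f := fun j => (g.coeff j).natDegree) hj
    · simp [notMem_support_iff.1 hj]⟩

section WeightFiltration

variable {F : Type*} [Field F] {f : F[X][Y]} {κ : ℕ}

/-- The functions on the curve `f = 0` of weight at most `m`, where `x` has weight `1` and `y`
has weight `κ`. -/
noncomputable def weightFiltration (f : F[X][Y]) (κ m : ℕ) : Submodule F (AdjoinRoot f) :=
  Submodule.span F
    {z | ∃ i j, i + κ * j ≤ m ∧ z = AdjoinRoot.of f X ^ i * AdjoinRoot.root f ^ j}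

/-- The exponents `(i, j)` of the monomials `x ^ i * y ^ j` of weight at most `m` and of degree less
than `d` in `y`. -/
def weightIndices (d κ m : ℕ) : Finset (ℕ × Fin d) :=
  (Finset.range (m + 1) ×ˢ Finset.univ).filter fun ij => ij.1 + κ * ij.2 ≤ m

lemma mem_weightIndices {d m : ℕ} {ij : ℕ × Fin d} :
    ij ∈ weightIndices d κ m ↔ ij.1 + κ * ij.2 ≤ m := by
  simp only [weightIndices, Finset.mem_filter, Finset.mem_product, Finset.mem_range,
    Finset.mem_univ, and_true, and_iff_right_iff_imp]
  omega

lemma card_weightIndices (d κ m : ℕ) :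
    (weightIndices d κ m).card = ∑ j : Fin d, (m + 1 - κ * j) := by
  rw [weightIndices, Finset.card_filter, Finset.sum_product_right]
  refine Finset.sum_congr rfl fun j _ => ?_
  rw [← Finset.card_filter, ← Finset.card_range (m + 1 - κ * j)]
  congr 1
  ext i
  simp only [Finset.mem_filter, Finset.mem_range]
  omega

lemma card_weightIndices_le (d κ m : ℕ) : (weightIndices d κ m).card ≤ d * (m + 1) := by
  rw [card_weightIndices]
  simpa using Finset.sum_le_card_nsmul Finset.univ (fun j : Fin d => m + 1 - κ * j) (m + 1)
    fun j _ => Nat.sub_le _ _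

lemma le_card_weightIndices (d κ m : ℕ) :
    d * (m + 1) ≤ (weightIndices d κ m).card + d * (κ * d) := by
  have hj (j : Fin d) : m + 1 ≤ m + 1 - κ * j + κ * d := by
    have := Nat.mul_le_mul_left κ j.2.le
    omega
  simpa [card_weightIndices, Finset.sum_add_distrib] using
    Finset.sum_le_sum fun j (_ : j ∈ Finset.univ) => hj j

lemma mk_eq_sum (g : F[X][Y]) :
    AdjoinRoot.mk f g = ∑ j ∈ g.support, ∑ i ∈ (g.coeff j).support,
      (g.coeff j).coeff i • (AdjoinRoot.of f X ^ i * AdjoinRoot.root f ^ j) := by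
  conv_lhs => rw [g.as_sum_support_C_mul_X_pow, map_sum]
  refine Finset.sum_congr rfl fun j _ => ?_
  rw [map_mul, map_pow, AdjoinRoot.mk_X, AdjoinRoot.mk_C]
  conv_lhs => rw [(g.coeff j).as_sum_support_C_mul_X_pow, map_sum, Finset.sum_mul]
  refine Finset.sum_congr rfl fun i _ => ?_
  rw [map_mul, map_pow, Algebra.smul_def, mul_assoc]
  rfl

lemma monomial_mem_weightFiltration {i j m : ℕ} (h : i + κ * j ≤ m) :
    AdjoinRoot.of f X ^ i * AdjoinRoot.root f ^ j ∈ weightFiltration f κ m :=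
  Submodule.subset_span ⟨i, j, h, rfl⟩

lemma mk_mem_weightFiltration {g : F[X][Y]} {n δ : ℕ} (hn : g.natDegree ≤ n)
    (hδ : ∀ j, (g.coeff j).natDegree ≤ δ) :
    AdjoinRoot.mk f g ∈ weightFiltration f κ (δ + κ * n) := by
  rw [mk_eq_sum]
  exact sum_mem fun j hj => sum_mem fun i hi => Submodule.smul_mem _ _ <|
    monomial_mem_weightFiltration <| Nat.add_le_add ((le_natDegree_of_mem_supp i hi).trans (hδ j))
      (Nat.mul_le_mul_left _ ((le_natDegree_of_mem_supp j hj).trans hn))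

lemma weightFiltration_mono (f : F[X][Y]) (κ : ℕ) : Monotone (weightFiltration f κ) :=
  fun _ _ h => Submodule.span_mono fun _ ⟨i, j, hij, hz⟩ => ⟨i, j, hij.trans h, hz⟩

lemma mul_mem_weightFiltration {m n : ℕ} {a b : AdjoinRoot f} (ha : a ∈ weightFiltration f κ m)
    (hb : b ∈ weightFiltration f κ n) : a * b ∈ weightFiltration f κ (m + n) := by
  have hab := Submodule.mul_mem_mul ha hb
  rw [weightFiltration, weightFiltration, Submodule.span_mul_span] at hab
  refine Submodule.span_mono ?_ hab
  rintro _ ⟨_, ⟨i, j, h, rfl⟩, _, ⟨i', j', h', rfl⟩, rfl⟩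
  exact ⟨i + i', j + j', by linarith [mul_add κ j j'], by simp only; ring⟩

lemma exists_mem_weightFiltration (z : AdjoinRoot f) : ∃ m, z ∈ weightFiltration f κ m := by
  obtain ⟨g, rfl⟩ := AdjoinRoot.mk_surjective z
  obtain ⟨δ, hδ⟩ := exists_forall_natDegree_coeff_le g
  exact ⟨_, mk_mem_weightFiltration le_rfl hδ⟩

/-- The basis `x ^ i * y ^ j`, `j < f.natDegree`, of the coordinate ring of `f = 0`. -/
noncomputable def monomialBasis (hf : f.Monic) : Basis (ℕ × Fin f.natDegree) F (AdjoinRoot f) :=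
  (basisMonomials F).smulTower (AdjoinRoot.powerBasisAux' hf)

lemma monomialBasis_apply (hf : f.Monic) (ij : ℕ × Fin f.natDegree) :
    monomialBasis hf ij = AdjoinRoot.of f X ^ ij.1 * AdjoinRoot.root f ^ (ij.2 : ℕ) := by
  have hroot : AdjoinRoot.powerBasisAux' hf ij.2 = AdjoinRoot.root f ^ (ij.2 : ℕ) :=
    (AdjoinRoot.powerBasis' hf).basis_eq_pow ij.2
  simp only [monomialBasis, Basis.smulTower_apply, hroot, coe_basisMonomials,
    monomial_one_right_eq_X_pow, Algebra.smul_def, map_pow]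
  rfl

lemma root_pow_natDegree (hf : f.Monic) :
    AdjoinRoot.root f ^ f.natDegree = -AdjoinRoot.mk f f.eraseLead := by
  rw [eq_neg_iff_add_eq_zero, ← AdjoinRoot.mk_X, ← map_pow, ← map_add]
  conv_rhs => rw [← AdjoinRoot.mk_self (f := f)]
  congr 1
  conv_rhs => rw [← f.eraseLead_add_C_mul_X_pow, hf.leadingCoeff]
  rw [C_1, one_mul, add_comm]

lemma monomial_mem_span_monomialBasis (hf : f.Monic) (hκ : ∀ j, (f.coeff j).natDegree ≤ κ)
    {i j m : ℕ} (hij : i + κ * j ≤ m) : AdjoinRoot.of f X ^ i * AdjoinRoot.root f ^ j ∈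
      Submodule.span F (monomialBasis hf '' weightIndices f.natDegree κ m) := by
  induction j using Nat.strong_induction_on generalizing i with
  | _ j ih =>
  obtain hj | hj := lt_or_ge j f.natDegree
  · rw [← monomialBasis_apply hf (i, ⟨j, hj⟩)]
    exact Submodule.subset_span ⟨_, mem_weightIndices.2 hij, rfl⟩
  obtain ⟨k, rfl⟩ := Nat.exists_eq_add_of_le hj
  rw [pow_add, root_pow_natDegree hf, mk_eq_sum, neg_mul, mul_neg]
  simp only [Finset.sum_mul, Finset.mul_sum]
  refine neg_mem (sum_mem fun j' hj' => sum_mem fun i' hi' => ?_)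
  rw [eraseLead_support, Finset.mem_erase] at hj'
  have hj'd : j' < f.natDegree := lt_of_le_of_ne (le_natDegree_of_mem_supp j' hj'.2) hj'.1
  have hi'κ : i' ≤ κ := by
    rw [eraseLead_coeff_of_ne _ hj'.1] at hi'
    exact (le_natDegree_of_mem_supp i' hi').trans (hκ j')
  have hweight : (i + i') + κ * (k + j') ≤ m := by
    have : κ * (k + j' + 1) ≤ κ * (f.natDegree + k) := Nat.mul_le_mul_left _ (by omega)
    rw [mul_add, mul_one] at this
    omega
  have hmonomial := Submodule.smul_mem _ ((f.eraseLead.coeff j').coeff i')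
    (ih (k + j') (by omega) hweight)
  rw [pow_add, pow_add] at hmonomial
  rw [smul_mul_assoc, mul_smul_comm]
  convert hmonomial using 2
  ring

lemma weightFiltration_eq_span (hf : f.Monic) (hκ : ∀ j, (f.coeff j).natDegree ≤ κ) (m : ℕ) :
    weightFiltration f κ m =
      Submodule.span F (monomialBasis hf '' weightIndices f.natDegree κ m) := by
  refine le_antisymm (Submodule.span_le.2 ?_) (Submodule.span_mono ?_)
  · rintro _ ⟨i, j, h, rfl⟩
    exact monomial_mem_span_monomialBasis hf hκ h
  · rintro _ ⟨ij, h, rfl⟩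
    exact ⟨ij.1, ij.2, mem_weightIndices.1 h, monomialBasis_apply hf ij⟩

lemma finrank_weightFiltration (hf : f.Monic) (hκ : ∀ j, (f.coeff j).natDegree ≤ κ) (m : ℕ) :
    finrank F (weightFiltration f κ m) = (weightIndices f.natDegree κ m).card := by
  have hli := (monomialBasis hf).linearIndependent.comp
    (Subtype.val : weightIndices f.natDegree κ m → _) Subtype.val_injective
  have hspan := finrank_span_eq_card hli
  rw [Set.range_comp, Subtype.range_coe_subtype, Fintype.card_coe] at hspan
  rw [weightFiltration_eq_span hf hκ, ← hspan]
  rfl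

theorem isLinearGrowthFiltration_weightFiltration (hf : f.Monic)
    (hκ : ∀ j, (f.coeff j).natDegree ≤ κ) :
    IsLinearGrowthFiltration (weightFiltration f κ) f.natDegree
      (f.natDegree * (κ * f.natDegree)) where
  mono := weightFiltration_mono f κ
  one_mem := by simpa using monomial_mem_weightFiltration (f := f) (κ := κ) (i := 0) (j := 0) le_rfl
  mul_mem := mul_mem_weightFiltration
  exists_mem := exists_mem_weightFiltration
  finite m := by
    rw [weightFiltration_eq_span hf hκ]
    exact Module.Finite.iff_fg.2 (Submodule.fg_span ((Finset.finite_toSet _).image _))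
  finrank_le m := finrank_weightFiltration hf hκ m ▸ card_weightIndices_le _ κ m
  le_finrank m := finrank_weightFiltration hf hκ m ▸ le_card_weightIndices _ κ m

end WeightFiltration

/-! ### Points of a plane curve over an algebraically closed field -/

section Points

variable {F : Type*} [Field F] {f : F[X][Y]} {κ : ℕ}

/-- The point `(a, b)` of the curve `f = 0`, as a homomorphism on its coordinate ring. -/
noncomputable def pointHom {a b : F} (h : f.evalEval a b = 0) : AdjoinRoot f →ₐ[F] F :=
  { AdjoinRoot.evalEval h with
    commutes' := fun r => (AdjoinRoot.evalEval_mk h (C (C r))).trans (evalEval_CC a b r) }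

lemma pointHom_mk {a b : F} (h : f.evalEval a b = 0) (g : F[X][Y]) :
    pointHom h (AdjoinRoot.mk f g) = g.evalEval a b :=
  AdjoinRoot.evalEval_mk h g

lemma pointHom_of_X {a b : F} (h : f.evalEval a b = 0) : pointHom h (AdjoinRoot.of f X) = a := by
  simpa [evalEval_C] using pointHom_mk h (C X)

lemma pointHom_root {a b : F} (h : f.evalEval a b = 0) : pointHom h (AdjoinRoot.root f) = b := by
  simpa using pointHom_mk h Y

lemma exists_evalEval_eq_zero [IsAlgClosed F] (hf : f.Monic) (hd : f.natDegree ≠ 0) (a : F) :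
    ∃ b, f.evalEval a b = 0 := by
  obtain ⟨b, hb⟩ := IsAlgClosed.exists_root (f.map (evalRingHom a)) (by
    rw [hf.degree_map, degree_eq_natDegree hf.ne_zero]
    exact_mod_cast hd)
  exact ⟨b, by rwa [IsRoot, map_evalRingHom_eval] at hb⟩

lemma card_le_of_forall_exists_evalEval_eq_zero [IsDomain (AdjoinRoot f)] (hf : f.Monic)
    (hκ : ∀ j, (f.coeff j).natDegree ≤ κ) {g : F[X][Y]} {w : ℕ}
    (hg : AdjoinRoot.mk f g ∈ weightFiltration f κ w) (hg0 : AdjoinRoot.mk f g ≠ 0)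
    (S : Finset F) (hS : ∀ a ∈ S, ∃ b, f.evalEval a b = 0 ∧ g.evalEval a b = 0) :
    S.card ≤ f.natDegree * w + f.natDegree * (κ * f.natDegree) := by
  classical
  choose! b hb using hS
  let point (a : S) := pointHom (hb a.1 a.2).1
  have hpoint : Function.Injective point := fun a a' h => Subtype.ext <| by
    simpa only [point, pointHom_of_X] using DFunLike.congr_fun h (AdjoinRoot.of f X)
  have hcard := (isLinearGrowthFiltration_weightFiltration hf hκ).card_zeros_le hg hg0
    (Finset.univ.image point) (by
      simp only [Finset.mem_image, Finset.mem_univ, true_and, forall_exists_index]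
      rintro _ a rfl
      rw [pointHom_mk, (hb a.1 a.2).2])
  simpa [Finset.card_image_of_injective _ hpoint] using hcard

lemma derivative_mem_weightFiltration (hκ : ∀ j, (f.coeff j).natDegree ≤ κ) :
    AdjoinRoot.mk f (derivative f) ∈ weightFiltration f κ (κ + κ * f.natDegree) := by
  refine mk_mem_weightFiltration ((natDegree_derivative_le f).trans (Nat.sub_le _ _)) fun j => ?_
  rw [coeff_derivative, ← Nat.cast_succ, mul_comm, ← nsmul_eq_mul]
  exact (natDegree_smul_le _ _).trans (hκ _)

lemma mk_derivative_ne_zero (hf : f.Monic) (hder : derivative f ≠ 0) :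
    AdjoinRoot.mk f (derivative f) ≠ 0 :=
  AdjoinRoot.mk_ne_zero_of_natDegree_lt hf hder <| natDegree_derivative_lt fun h =>
    hder (derivative_of_natDegree_zero h)

lemma card_le_of_forall_exists_singular [IsDomain (AdjoinRoot f)] (hf : f.Monic)
    (hκ : ∀ j, (f.coeff j).natDegree ≤ κ) (hder : derivative f ≠ 0) (S : Finset F)
    (hS : ∀ a ∈ S, ∃ b, f.evalEval a b = 0 ∧ (derivative f).evalEval a b = 0) :
    S.card ≤ f.natDegree * (κ + κ * f.natDegree) + f.natDegree * (κ * f.natDegree) :=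
  card_le_of_forall_exists_evalEval_eq_zero hf hκ (derivative_mem_weightFiltration hκ)
    (mk_derivative_ne_zero hf hder) S hS

/-- Hensel's lemma turns a point at which `x - a` is a local parameter into a power series point. -/
lemma exists_algHom_powerSeries (hf : f.Monic) {a b : F} (h : f.evalEval a b = 0)
    (h' : (derivative f).evalEval a b ≠ 0) :
    ∃ ψ : AdjoinRoot f →ₐ[F] PowerSeries F, ψ (AdjoinRoot.of f (X - C a)) = PowerSeries.X := by
  let θ : F[X] →ₐ[F] PowerSeries F := aeval (PowerSeries.C a + PowerSeries.X)
  have hθ : (PowerSeries.constantCoeff (R := F)).comp (θ : F[X] →+* PowerSeries F)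
      = evalRingHom a := by
    ext <;> simp [θ]
  have hconst (g : F[X][Y]) : PowerSeries.constantCoeff
      (eval (PowerSeries.C b) (g.map (θ : F[X] →+* PowerSeries F))) = g.evalEval a b := by
    rw [eval_map, hom_eval₂, hθ, PowerSeries.constantCoeff_C, eval₂_evalRingHom]
  obtain ⟨z, hz, -⟩ := HenselianRing.is_henselian
    (I := Ideal.span {(PowerSeries.X : PowerSeries F)})
    (f.map (θ : F[X] →+* PowerSeries F)) (hf.map _) (PowerSeries.C b)
    (by rw [Ideal.mem_span_singleton, PowerSeries.X_dvd_iff, hconst, h])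
    (by
      apply IsUnit.map
      rw [derivative_map, PowerSeries.isUnit_iff_constantCoeff, hconst]
      exact isUnit_iff_ne_zero.2 h')
  refine ⟨AdjoinRoot.liftAlgHom f θ z (by rwa [IsRoot, eval_map] at hz), ?_⟩
  rw [AdjoinRoot.liftAlgHom_of]
  simp [θ]

lemma exists_algHom_powerSeries_of_derivative_ne_zero [IsAlgClosed F] [IsDomain (AdjoinRoot f)]
    (hf : f.Monic) (hder : derivative f ≠ 0) :
    ∃ (ψ : AdjoinRoot f →ₐ[F] PowerSeries F) (t : AdjoinRoot f), ψ t = PowerSeries.X := by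
  suffices ∃ a b, f.evalEval a b = 0 ∧ (derivative f).evalEval a b ≠ 0 by
    obtain ⟨a, b, h, h'⟩ := this
    obtain ⟨ψ, hψ⟩ := exists_algHom_powerSeries hf h h'
    exact ⟨ψ, _, hψ⟩
  by_contra! hsingular
  obtain ⟨κ, hκ⟩ := exists_forall_natDegree_coeff_le f
  have : Infinite F := IsAlgClosed.instInfinite
  obtain ⟨S, hS⟩ := Infinite.exists_subset_card_eq F
    (f.natDegree * (κ + κ * f.natDegree) + f.natDegree * (κ * f.natDegree) + 1)
  have := card_le_of_forall_exists_singular hf hκ hder S fun a _ => by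
    obtain ⟨b, hb⟩ := exists_evalEval_eq_zero hf
      (fun h => hder (derivative_of_natDegree_zero h)) a
    exact ⟨b, hb, hsingular a b hb⟩
  omega

lemma card_fiber [IsAlgClosed F] [DecidableEq F] (hf : f.Monic) {a : F}
    (ha : ∀ b, f.evalEval a b = 0 → (derivative f).evalEval a b ≠ 0) :
    (f.map (evalRingHom a)).roots.toFinset.card = f.natDegree := by
  have hnodup : (f.map (evalRingHom a)).roots.Nodup := by
    refine Multiset.nodup_iff_count_le_one.2 fun b => ?_
    rw [count_roots]
    by_contra! hlt
    have hb := (one_lt_rootMultiplicity_iff_isRoot (hf.map _).ne_zero).1 hlt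
    simp only [IsRoot, derivative_map, map_evalRingHom_eval] at hb
    exact ha b hb.1 hb.2
  rw [Multiset.toFinset_card_of_nodup hnodup,
    ← (IsAlgClosed.splits _).natDegree_eq_card_roots, hf.natDegree_map]

lemma mem_fiber [DecidableEq F] (hf : f.Monic) {a b : F} :
    b ∈ (f.map (evalRingHom a)).roots.toFinset ↔ f.evalEval a b = 0 := by
  rw [Multiset.mem_toFinset, mem_roots (hf.map _).ne_zero, IsRoot, map_evalRingHom_eval]

lemma exists_finset_fixedPoints_frobenius [IsAlgClosed F] (p : ℕ) [Fact p.Prime] [CharP F p]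
    {e : ℕ} (he : e ≠ 0) : ∃ S : Finset F, S.card = p ^ e ∧ ∀ a, a ∈ S ↔ a ^ p ^ e = a := by
  classical
  have hq : 1 < p ^ e := Nat.one_lt_pow he (Fact.out : p.Prime).one_lt
  refine ⟨(X ^ p ^ e - X : F[X]).roots.toFinset, ?_, fun a => ?_⟩
  · rw [Multiset.toFinset_card_of_nodup
        (nodup_roots (galois_poly_separable p (p ^ e) (dvd_pow_self p he))),
      ← (IsAlgClosed.splits (X ^ p ^ e - X : F[X])).natDegree_eq_card_roots,
      FiniteField.X_pow_card_sub_X_natDegree_eq F hq]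
  · rw [Multiset.mem_toFinset, mem_roots (FiniteField.X_pow_card_sub_X_ne_zero F hq)]
    simp [sub_eq_zero]

end Points

/-! ### Counting twisted points -/

/-- The point `(a, b)` of the curve `f = 0` is twisted by `h / D` with respect to `σ` if `a` is
fixed by `σ` and `σ b = h (a, b) / D a`. -/
structure IsTwistedPoint {K : Type*} [CommRing K] (σ : K → K) (f : K[X][Y]) (D : K[X])
    (h : K[X][Y]) (a b : K) : Prop where
  fixed : σ a = a
  zero : f.evalEval a b = 0
  ne_zero : D.eval a ≠ 0
  twist : D.eval a * σ b = h.evalEval a b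

lemma isTwistedPoint_iff {K : Type*} [CommRing K] {σ : K → K} {f : K[X][Y]} {D : K[X]}
    {h : K[X][Y]} {a b : K} :
    IsTwistedPoint σ f D h a b ↔
      σ a = a ∧ f.evalEval a b = 0 ∧ D.eval a ≠ 0 ∧ D.eval a * σ b = h.evalEval a b :=
  ⟨fun ⟨ha, hb, hD, h⟩ => ⟨ha, hb, hD, h⟩, fun ⟨ha, hb, hD, h⟩ => ⟨ha, hb, hD, h⟩⟩

/-- Above every fixed point of `σ` outside the zeros of `D`, all points of the curve `f = 0` are
twisted by one of the functions `h i / D`. -/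
def IsTwistCover {K ι : Type*} [CommRing K] (σ : K → K) (f : K[X][Y]) (D : K[X])
    (h : ι → K[X][Y]) : Prop :=
  ∀ a b, σ a = a → f.evalEval a b = 0 → D.eval a ≠ 0 → ∃ i, IsTwistedPoint σ f D (h i) a b

lemma lt_mul_of_stepanov_parameters {d c n₀ t l m A B : ℕ} (hd : 0 < d)
    (hl : l = (c + 1) * t + (2 + 2 * c + d * n₀)) (hm : d * m ≤ t + 1 + c)
    (hA : d * (l + 1) ≤ A + c) (hB : t + 1 ≤ B) : d * (t * l + (m + n₀) + 1) < A * B := by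
  have hAB : A * (t + 1) ≤ A * B := Nat.mul_le_mul_left _ hB
  have hAt : d * (l + 1) * t ≤ (A + c) * t := Nat.mul_le_mul_right _ hA
  have hlA : l + d ≤ A + c := by nlinarith
  nlinarith

lemma lt_mul_of_few_bad_points {d c c₃ t Q l m g : ℕ} (hd : 0 < d) (hQ : d * l + c < Q)
    (hm : d * m ≤ t + 1 + c) (ht : d * c₃ + d * (2 + c) < t) (hg : Q * t ≤ g + c₃) :
    (d - 1) * (d * (l + Q * m) + c) < g * d := by
  obtain ⟨d, rfl⟩ := Nat.exists_eq_succ_of_ne_zero hd.ne'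
  have hQm : Q * ((d + 1) * m) ≤ Q * (t + 1 + c) := Nat.mul_le_mul_left _ hm
  have hupper : (d + 1) * (l + Q * m) + c ≤ Q * (t + (2 + c)) := by nlinarith
  have hd' : d * ((d + 1) * (l + Q * m) + c) ≤ d * (Q * (t + (2 + c))) :=
    Nat.mul_le_mul_left _ hupper
  have hlower : Q * t * (d + 1) ≤ (g + c₃) * (d + 1) := Nat.mul_le_mul_right _ hg
  have hQt : Q * ((d + 1) * c₃ + (d + 1) * (2 + c)) < Q * t :=
    Nat.mul_lt_mul_of_pos_left ht (by omega)
  have hQc : (d + 1) * c₃ ≤ Q * ((d + 1) * c₃) := Nat.le_mul_of_pos_left _ (by omega)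
  simp only [Nat.succ_eq_add_one, Nat.add_sub_cancel]
  nlinarith

/-- Stepanov's parameters: `l` has size `(c + 1) * t` and `m` has size `t / d`, where `Q * t` is the
order of the Frobenius. Then `d - 1` of the `d` twists cannot account for all points above all but
`c₃` of the `Q * t` fixed points. -/
lemma exists_stepanov_parameters {d : ℕ} (hd : 0 < d) (c n₀ c₃ : ℕ) :
    ∃ t₀, ∀ t > t₀, ∀ Q ≥ t * t, ∃ l m, d * l + c < Q ∧
      (∀ A B, d * (l + 1) ≤ A + c → d * (m + 1) ≤ B + c →
        d * (t * l + (m + n₀) + 1) < A * B) ∧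
      ∀ g, Q * t ≤ g + c₃ → (d - 1) * (d * (l + Q * m) + c) < g * d := by
  refine ⟨d * (c + 1 + (2 + 2 * c + d * n₀)) + c + (d * c₃ + d * (2 + c)), fun t ht Q hQ =>
    ⟨(c + 1) * t + (2 + 2 * c + d * n₀), (t + 1 + c) / d, ?_⟩⟩
  have hm : d * ((t + 1 + c) / d) ≤ t + 1 + c := Nat.mul_div_le _ _
  have hm' : t + 1 + c < d * ((t + 1 + c) / d + 1) := Nat.lt_mul_div_succ _ hd
  have hl : d * ((c + 1) * t + (2 + 2 * c + d * n₀)) + c < Q :=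
    calc d * ((c + 1) * t + (2 + 2 * c + d * n₀)) + c
        ≤ (d * (c + 1 + (2 + 2 * c + d * n₀)) + c) * t := by
          have h : 2 + 2 * c + d * n₀ ≤ (2 + 2 * c + d * n₀) * t :=
            Nat.le_mul_of_pos_right _ (by omega)
          have h' : c ≤ c * t := Nat.le_mul_of_pos_right _ (by omega)
          nlinarith
      _ < t * t := Nat.mul_lt_mul_of_pos_right (by omega) (by omega)
      _ ≤ Q := hQ
  exact ⟨hl, fun A B hA hB => lt_mul_of_stepanov_parameters hd rfl hm hA (by omega),
    fun g hg => lt_mul_of_few_bad_points hd hl hm (by omega) hg⟩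

section Count

variable {F : Type*} [Field F] {f h : F[X][Y]} {D : F[X]} {κ δ p : ℕ}

lemma exists_twist [ExpChar F p] (hf : f.Monic) (hκ : ∀ j, (f.coeff j).natDegree ≤ κ)
    {D h : AdjoinRoot f} (hD : D ∈ weightFiltration f κ δ) (hh : h ∈ weightFiltration f κ δ)
    (e : ℕ) {m : ℕ} {s : AdjoinRoot f} (hs : s ∈ weightFiltration f κ m) :
    ∃ t ∈ weightFiltration f κ (m + f.natDegree * δ), ∀ φ : AdjoinRoot f →ₐ[F] F,
      φ (AdjoinRoot.of f X) ^ p ^ e = φ (AdjoinRoot.of f X) →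
      φ D * φ (AdjoinRoot.root f) ^ p ^ e = φ h →
      φ t = φ (D ^ f.natDegree) * φ s ^ p ^ e := by
  have hW := isLinearGrowthFiltration_weightFiltration hf hκ
  rw [weightFiltration_eq_span hf hκ] at hs
  induction hs using Submodule.span_induction with
  | mem s hs =>
    obtain ⟨⟨i, j⟩, hij, rfl⟩ := hs
    have hweight := mem_weightIndices.1 hij
    have hDh : D ^ (f.natDegree - j) * h ^ (j : ℕ) ∈ weightFiltration f κ (f.natDegree * δ) := by
      have := hW.mul_mem (hW.pow_mem hD (f.natDegree - j)) (hW.pow_mem hh j)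
      rwa [← add_mul, Nat.sub_add_cancel j.2.le] at this
    refine ⟨AdjoinRoot.of f X ^ i * (D ^ (f.natDegree - j) * h ^ (j : ℕ)),
      hW.mul_mem (hW.mono (show i ≤ m by omega) ?_) hDh, fun φ hx hy => ?_⟩
    · simpa using
        monomial_mem_weightFiltration (f := f) (κ := κ) (i := i) (j := 0) (m := i) (by simp)
    · have hx' : (φ (AdjoinRoot.of f X) ^ i) ^ p ^ e = φ (AdjoinRoot.of f X) ^ i := by
        rw [pow_right_comm, hx]
      simp only [monomialBasis_apply, map_mul, map_pow, mul_pow, hx', ← hy]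
      rw [← pow_sub_mul_pow (φ D) j.2.le]
      ring
  | zero => exact ⟨0, zero_mem _, fun φ _ _ => by
      simp [zero_pow (pow_pos (expChar_pos F p) e).ne']⟩
  | add s s' _ _ ih ih' =>
    obtain ⟨t, ht, hφ⟩ := ih
    obtain ⟨t', ht', hφ'⟩ := ih'
    refine ⟨t + t', add_mem ht ht', fun φ hx hy => ?_⟩
    rw [map_add, hφ φ hx hy, hφ' φ hx hy, map_add, add_pow_expChar_pow, mul_add]
  | smul c s _ ih =>
    obtain ⟨t, ht, hφ⟩ := ih
    refine ⟨c ^ p ^ e • t, Submodule.smul_mem _ _ ht, fun φ hx hy => ?_⟩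
    rw [map_smul, hφ φ hx hy, map_smul, smul_eq_mul, smul_eq_mul, mul_pow]
    ring

lemma card_twistedPoints_le [IsAlgClosed F] [ExpChar F p] (hf : f.Monic) (hirr : Irreducible f)
    (hκ : ∀ j, (f.coeff j).natDegree ≤ κ) (hder : derivative f ≠ 0)
    (hD : AdjoinRoot.mk f (C D) ∈ weightFiltration f κ δ)
    (hh : AdjoinRoot.mk f h ∈ weightFiltration f κ δ) {k μ l m : ℕ}
    (hl : f.natDegree * l + f.natDegree * (κ * f.natDegree) < p ^ k)
    (hcard : f.natDegree * (p ^ μ * l + (m + f.natDegree * δ) + 1) <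
      finrank F (weightFiltration f κ l) * finrank F (weightFiltration f κ m))
    (S : Finset (F × F)) (hS : ∀ z ∈ S, IsTwistedPoint (· ^ p ^ (k + μ)) f D h z.1 z.2) :
    S.card ≤ f.natDegree * (l + p ^ k * m) + f.natDegree * (κ * f.natDegree) := by
  classical
  have : IsDomain (AdjoinRoot f) := AdjoinRoot.isDomain_of_prime hirr.prime
  obtain ⟨ψ, t, hψ⟩ := exists_algHom_powerSeries_of_derivative_ne_zero hf hder
  let point (z : S) := pointHom (hS z.1 z.2).zero
  have hpoint : Function.Injective point := fun z z' h => Subtype.ext <| Prod.ext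
    (by simpa only [point, pointHom_of_X] using DFunLike.congr_fun h (AdjoinRoot.of f X))
    (by simpa only [point, pointHom_root] using DFunLike.congr_fun h (AdjoinRoot.root f))
  have hpointD (z : S) : point z (AdjoinRoot.mk f (C D)) = D.eval z.1.1 := by
    rw [pointHom_mk, evalEval_C]
  have hbound := (isLinearGrowthFiltration_weightFiltration hf hκ).card_le_of_twist (p := p) ψ hψ hl
    (Finset.univ.image point) (AdjoinRoot.mk f (C D) ^ f.natDegree)
    (by
      simp only [Finset.mem_image, Finset.mem_univ, true_and, forall_exists_index]
      rintro _ z rfl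
      rw [map_pow, hpointD]
      exact pow_ne_zero _ (hS z.1 z.2).ne_zero)
    (fun s hs => by
      obtain ⟨t, ht, hφ⟩ := exists_twist (p := p) hf hκ hD hh (k + μ) hs
      refine ⟨t, ht, ?_⟩
      simp only [Finset.mem_image, Finset.mem_univ, true_and, forall_exists_index]
      rintro _ z rfl
      refine hφ _ ?_ ?_
      · rw [pointHom_of_X]
        exact (hS z.1 z.2).fixed
      · rw [hpointD, pointHom_root, pointHom_mk]
        exact (hS z.1 z.2).twist)
    hcard
  simpa [Finset.card_image_of_injective _ hpoint] using hbound

lemma exists_finset_smooth_fixedPoints [IsAlgClosed F] [Fact p.Prime] [CharP F p] (hf : f.Monic)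
    (hirr : Irreducible f) (hκ : ∀ j, (f.coeff j).natDegree ≤ κ) (hder : derivative f ≠ 0)
    (hD : D ≠ 0) {e : ℕ} (he : e ≠ 0) :
    ∃ G : Finset F, p ^ e ≤ G.card + (D.natDegree +
        (f.natDegree * (κ + κ * f.natDegree) + f.natDegree * (κ * f.natDegree))) ∧
      ∀ a ∈ G, a ^ p ^ e = a ∧ D.eval a ≠ 0 ∧
        ∀ b, f.evalEval a b = 0 → (derivative f).evalEval a b ≠ 0 := by
  classical
  have : IsDomain (AdjoinRoot f) := AdjoinRoot.isDomain_of_prime hirr.prime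
  obtain ⟨S, hScard, hS⟩ := exists_finset_fixedPoints_frobenius (F := F) p he
  let singular := S.filter fun a => ∃ b, f.evalEval a b = 0 ∧ (derivative f).evalEval a b = 0
  refine ⟨S \ (D.roots.toFinset ∪ singular), ?_, fun a ha => ?_⟩
  · have hsingular : singular.card ≤ _ := card_le_of_forall_exists_singular hf hκ hder singular
      fun a ha => (Finset.mem_filter.1 ha).2
    have hroots := (Multiset.toFinset_card_le D.roots).trans D.card_roots'
    have hunion := Finset.card_union_le D.roots.toFinset singular
    have hsdiff := Finset.le_card_sdiff (D.roots.toFinset ∪ singular) S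
    omega
  · simp only [Finset.mem_sdiff, Finset.mem_union, Multiset.mem_toFinset, mem_roots hD, IsRoot,
      not_or, singular, Finset.mem_filter, not_and, not_exists, hS] at ha
    exact ⟨ha.1, ha.2.1, ha.2.2 ha.1⟩

lemma card_mul_natDegree_le_of_isTwistCover [IsAlgClosed F] {σ : F → F} {ι : Type*} [Fintype ι]
    {h : ι → F[X][Y]} (hf : f.Monic) (hcover : IsTwistCover σ f D h) (G : Finset F)
    (hG : ∀ a ∈ G, σ a = a ∧ D.eval a ≠ 0 ∧
      ∀ b, f.evalEval a b = 0 → (derivative f).evalEval a b ≠ 0)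
    {B : ℕ} (hB : ∀ (i : ι) (S : Finset (F × F)),
      (∀ z ∈ S, IsTwistedPoint σ f D (h i) z.1 z.2) → S.card ≤ B)
    {i : ι} (hi : ∀ a b, ¬ IsTwistedPoint σ f D (h i) a b) :
    G.card * f.natDegree ≤ (Fintype.card ι - 1) * B := by
  classical
  let fiber (a : F) := (f.map (evalRingHom a)).roots.toFinset
  let T : Finset (Σ _ : F, F) := G.sigma fiber
  let T' (i : ι) : Finset (Σ _ : F, F) := T.filter fun z => IsTwistedPoint σ f D (h i) z.1 z.2
  have hT : T.card = G.card * f.natDegree := by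
    rw [Finset.card_sigma, Finset.sum_congr rfl fun a ha => card_fiber hf (hG a ha).2.2,
      Finset.sum_const, smul_eq_mul]
  have hT' (i : ι) : (T' i).card ≤ B := by
    rw [← Finset.card_map (Equiv.sigmaEquivProd F F).toEmbedding]
    refine hB i _ fun z hz => ?_
    obtain ⟨w, hw, rfl⟩ := Finset.mem_map.1 hz
    exact (Finset.mem_filter.1 hw).2
  have hempty : T' i = ∅ := Finset.filter_eq_empty_iff.2 fun z _ => hi z.1 z.2
  have hunion : T ⊆ Finset.univ.biUnion T' := fun z hz => by
    obtain ⟨ha, hb⟩ := Finset.mem_sigma.1 hz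
    obtain ⟨i, hi⟩ := hcover z.1 z.2 (hG _ ha).1 ((mem_fiber hf).1 hb) (hG _ ha).2.1
    exact Finset.mem_biUnion.2 ⟨i, Finset.mem_univ _, Finset.mem_filter.2 ⟨hz, hi⟩⟩
  calc G.card * f.natDegree = T.card := hT.symm
    _ ≤ ∑ j, (T' j).card := (Finset.card_le_card hunion).trans Finset.card_biUnion_le
    _ = ∑ j ∈ Finset.univ.erase i, (T' j).card := by
      rw [← Finset.add_sum_erase _ _ (Finset.mem_univ i), hempty, Finset.card_empty, zero_add]
    _ ≤ (Fintype.card ι - 1) * B := by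
      simpa using Finset.sum_le_card_nsmul (Finset.univ.erase i) _ B fun j _ => hT' j

end Count

/-- With `d` points of the curve above each of about `p ^ e` fixed points, and about `p ^ e` points
at most in each twist by Stepanov's method, none of `d` twists covering them can be missing. -/
theorem exists_isTwistedPoint_of_isTwistCover (F : Type*) [Field F] [IsAlgClosed F] (p : ℕ)
    [Fact p.Prime] [CharP F p] (d κ δ : ℕ) :
    ∃ e₀, ∀ e ≥ e₀, ∀ f : F[X][Y], f.Monic → f.natDegree = d → Irreducible f →
      (∀ j, (f.coeff j).natDegree ≤ κ) → derivative f ≠ 0 →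
      ∀ D : F[X], D ≠ 0 → D.natDegree ≤ δ →
      ∀ h : Fin d → F[X][Y], (∀ i, (h i).natDegree ≤ δ) →
      (∀ i j, ((h i).coeff j).natDegree ≤ δ) → IsTwistCover (· ^ p ^ e) f D h →
      ∀ i, ∃ a b, IsTwistedPoint (· ^ p ^ e) f D (h i) a b := by
  rcases Nat.eq_zero_or_pos d with rfl | hd
  · exact ⟨0, fun _ _ _ _ _ _ _ _ _ _ _ _ _ _ _ i => i.elim0⟩
  obtain ⟨t₀, ht₀⟩ := exists_stepanov_parameters hd (d * (κ * d)) (d * (δ + κ * δ))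
    (δ + (d * (κ + κ * d) + d * (κ * d)))
  refine ⟨3 * (t₀ + 1), ?_⟩
  rintro e he f hf rfl hirr hκ hder D hD hδ h hhδ hhδ' hcover i
  by_contra! hi
  obtain ⟨μ, k, rfl, hμ, hk⟩ : ∃ μ k, e = k + μ ∧ t₀ < μ ∧ μ + μ ≤ k :=
    ⟨e / 3, e - e / 3, by omega, by omega, by omega⟩
  have hp := (Fact.out : p.Prime).one_lt
  obtain ⟨l, m, hl, hdim, hcount⟩ := ht₀ (p ^ μ) (hμ.trans (Nat.lt_pow_self hp)) (p ^ k)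
    (by rw [ge_iff_le, ← pow_add]; exact Nat.pow_le_pow_right hp.le hk)
  obtain ⟨G, hGcard, hG⟩ := exists_finset_smooth_fixedPoints (p := p) hf hirr hκ hder hD
    (e := k + μ) (by omega)
  have hW := isLinearGrowthFiltration_weightFiltration hf hκ
  have hDW : AdjoinRoot.mk f (C D) ∈ weightFiltration f κ (δ + κ * δ) :=
    mk_mem_weightFiltration (by simp) fun j => by
      rw [coeff_C]
      split_ifs
      · exact hδ
      · simp
  have hle := card_mul_natDegree_le_of_isTwistCover hf hcover G hG
    (fun i => card_twistedPoints_le hf hirr hκ hder hDW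
      (mk_mem_weightFiltration (hhδ i) (hhδ' i)) hl (hdim _ _ (hW.le_finrank l) (hW.le_finrank m)))
    hi
  have hlt := hcount G.card (by rw [← pow_add]; omega)
  rw [Fintype.card_fin] at hle
  omega

/-! ### Ultrapowers and the nonstandard Frobenius -/

lemma natDegree_coeff_map_le {R S : Type*} [Semiring R] [Semiring S] (φ : R →+* S) {P : R[X][Y]}
    {κ : ℕ} (hκ : ∀ j, (P.coeff j).natDegree ≤ κ) (j : ℕ) :
    ((P.map (mapRingHom φ)).coeff j).natDegree ≤ κ := by
  rw [coeff_map]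
  exact natDegree_map_le.trans (hκ j)

section Swap

variable {R : Type*} [CommRing R]

lemma coeff_coeff_swap (P : R[X][Y]) (i j : ℕ) :
    ((Bivariate.swap P).coeff i).coeff j = (P.coeff j).coeff i := by
  induction P using Polynomial.induction_on' with
  | add P Q hP hQ => simp only [map_add, coeff_add, hP, hQ]
  | monomial n q =>
    induction q using Polynomial.induction_on' with
    | add q q' hq hq' => simp only [map_add, coeff_add, hq, hq']
    | monomial m r =>
      rw [Bivariate.swap_monomial_monomial]
      simp only [coeff_monomial]
      split_ifs <;> simp_all [coeff_monomial]

lemma natDegree_swap_le_iff {P : R[X][Y]} {κ : ℕ} :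
    (Bivariate.swap P).natDegree ≤ κ ↔ ∀ j, (P.coeff j).natDegree ≤ κ := by
  simp only [natDegree_le_iff_coeff_eq_zero, Polynomial.ext_iff, coeff_coeff_swap, coeff_zero]
  exact ⟨fun h j N hN => h N hN j, fun h N hN j => h j N hN⟩

lemma natDegree_coeff_le_of_dvd [IsDomain R] {u P : R[X][Y]} (hu : u ∣ P) (hP : P ≠ 0) {κ : ℕ}
    (hκ : ∀ j, (P.coeff j).natDegree ≤ κ) (j : ℕ) : (u.coeff j).natDegree ≤ κ :=
  natDegree_swap_le_iff.1 ((natDegree_le_of_dvd (_root_.map_dvd (Bivariate.swap (R := R)) hu)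
    ((map_ne_zero_iff _ (Bivariate.swap (R := R)).injective).2 hP)).trans
      (natDegree_swap_le_iff.2 hκ)) j

end Swap

/-- The ultrapower of `F` along the ultrafilter `l`. -/
abbrev Ultrapower {ι : Type*} (l : Ultrafilter ι) (F : Type*) := Germ (l : Filter ι) F

/-- The quotient map from families to the ultrapower. -/
abbrev germHom {ι : Type*} (l : Ultrafilter ι) (F : Type*) [CommRing F] :
    (ι → F) →+* Ultrapower l F :=
  Germ.coeRingHom (l : Filter ι)

/-- The projection of families to the component of index `k`. -/
abbrev componentHom {ι : Type*} (F : Type*) [CommRing F] (k : ι) : (ι → F) →+* F :=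
  Pi.evalRingHom (fun _ => F) k

section Ultrapower

variable {ι F : Type*} [Field F] {l : Ultrafilter ι}

lemma germHom_surjective : Function.Surjective (germHom l F) :=
  Quotient.mk_surjective

lemma germHom_eq_iff {x y : ι → F} : germHom l F x = germHom l F y ↔ ∀ᶠ k in l, x k = y k :=
  Germ.coe_eq

lemma germHom_eq_zero_iff {x : ι → F} : germHom l F x = 0 ↔ ∀ᶠ k in l, x k = 0 :=
  germHom_eq_iff (y := 0)

lemma eventually_map_componentHom_ne_zero {P : (ι → F)[X]} (hP : P.map (germHom l F) ≠ 0) :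
    ∀ᶠ k in l, P.map (componentHom F k) ≠ 0 := by
  contrapose! hP
  ext i
  rw [coeff_map, coeff_zero, germHom_eq_zero_iff]
  filter_upwards [hP] with k hk
  simpa using congrArg (fun Q : F[X] => Q.coeff i) hk

lemma eventually_map_mapRingHom_componentHom_ne_zero {P : (ι → F)[X][Y]}
    (hP : P.map (mapRingHom (germHom l F)) ≠ 0) :
    ∀ᶠ k in l, P.map (mapRingHom (componentHom F k)) ≠ 0 := by
  obtain ⟨i, hi⟩ : ∃ i, (P.coeff i).map (germHom l F) ≠ 0 := by
    by_contra! h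
    exact hP (Polynomial.ext fun i => by simpa using h i)
  filter_upwards [eventually_map_componentHom_ne_zero hi] with k hk h
  exact hk (by simpa using congrArg (fun Q : F[X][Y] => Q.coeff i) h)

lemma exists_forall_eventually_map_componentHom_eq {u : ι → F[X]} {δ : ℕ}
    (hu : ∀ᶠ k in l, (u k).natDegree ≤ δ) :
    ∃ P : (ι → F)[X], ∀ᶠ k in l, P.map (componentHom F k) = u k := by
  refine ⟨∑ i ∈ Finset.range (δ + 1), monomial i fun k => (u k).coeff i, ?_⟩
  filter_upwards [hu] with k hk
  rw [(u k).as_sum_range' (δ + 1) (Nat.lt_succ_of_le hk), Polynomial.map_sum]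
  simp

lemma exists_monic_forall_eventually_map_componentHom_eq {u : ι → F[X][Y]} {n δ : ℕ}
    (hu : ∀ᶠ k in l, (u k).Monic ∧ (u k).natDegree = n ∧ ∀ j, ((u k).coeff j).natDegree ≤ δ) :
    ∃ P : (ι → F)[X][Y], P.Monic ∧ P.natDegree = n ∧
      ∀ᶠ k in l, P.map (mapRingHom (componentHom F k)) = u k := by
  have : Nonempty ι := l.neBot.nonempty
  choose c hc using fun j => exists_forall_eventually_map_componentHom_eq
    (hu.mono fun k hk => hk.2.2 j)
  have hdeg : degree (∑ j ∈ Finset.range n, C (c j) * X ^ j) < n :=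
    (degree_sum_le _ _).trans_lt <| (Finset.sup_lt_iff (WithBot.bot_lt_coe n)).2 fun j hj =>
      (degree_C_mul_X_pow_le j _).trans_lt (WithBot.coe_lt_coe.2 (Finset.mem_range.1 hj))
  refine ⟨X ^ n + ∑ j ∈ Finset.range n, C (c j) * X ^ j, monic_X_pow_add hdeg, ?_, ?_⟩
  · rw [natDegree_add_eq_left_of_degree_lt (by rwa [degree_X_pow]), natDegree_X_pow]
  · filter_upwards [hu, (Finset.range n).eventually_all.2 fun j _ => hc j] with k hk hck
    rw [hk.1.as_sum, hk.2.1, Polynomial.map_add, Polynomial.map_sum]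
    congr 1
    · simp
    · refine Finset.sum_congr rfl fun j hj => ?_
      rw [Polynomial.map_mul, Polynomial.map_C, Polynomial.map_pow, Polynomial.map_X,
        coe_mapRingHom, hck j hj]

lemma exists_monic_map_germHom_eq {f : (Ultrapower l F)[X][Y]} (hf : f.Monic) :
    ∃ P : (ι → F)[X][Y], P.Monic ∧ P.map (mapRingHom (germHom l F)) = f := by
  obtain ⟨P, hP⟩ := Polynomial.map_surjective (mapRingHom (germHom l F))
    (Polynomial.map_surjective _ germHom_surjective) f
  obtain ⟨Q, hQ, -, hmonic⟩ := lifts_and_natDegree_eq_and_monic ((mem_lifts f).2 ⟨P, hP⟩) hf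
  exact ⟨Q, hmonic, hQ⟩

lemma exists_monic_mul_eq_map_germHom {P : (ι → F)[X][Y]} (hP : P.Monic) {u v : ι → F[X][Y]}
    {N : Finset ℕ} (huv : ∀ᶠ k in l, (u k).Monic ∧ (v k).Monic ∧
      u k * v k = P.map (mapRingHom (componentHom F k)) ∧ (v k).natDegree ∈ N) :
    ∃ U V : (Ultrapower l F)[X][Y], U.Monic ∧ V.Monic ∧
      U * V = P.map (mapRingHom (germHom l F)) ∧ V.natDegree ∈ N := by
  obtain ⟨δ, hδ⟩ := exists_forall_natDegree_coeff_le P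
  have hdvd {k : ι} {w : F[X][Y]} (hw : w ∣ P.map (mapRingHom (componentHom F k))) (j : ℕ) :
      (w.coeff j).natDegree ≤ δ :=
    natDegree_coeff_le_of_dvd hw (hP.map _).ne_zero (natDegree_coeff_map_le _ hδ) j
  obtain ⟨n, hn, hvn⟩ : ∃ n ∈ N, ∀ᶠ k in l, (v k).natDegree = n :=
    (Ultrafilter.eventually_exists_mem_iff N.finite_toSet).1
      (huv.mono fun k hk => ⟨_, hk.2.2.2, rfl⟩)
  obtain ⟨U, hU, -, hUu⟩ := exists_monic_forall_eventually_map_componentHom_eq (l := l) (u := u)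
    (n := P.natDegree - n) (δ := δ) (by
      filter_upwards [huv, hvn] with k hk hkn
      refine ⟨hk.1, ?_, hdvd (hk.2.2.1 ▸ dvd_mul_right _ _)⟩
      rw [← hP.natDegree_map (mapRingHom (componentHom F k)), ← hk.2.2.1,
        hk.1.natDegree_mul hk.2.1, hkn, Nat.add_sub_cancel])
  obtain ⟨V, hV, hVn, hVv⟩ := exists_monic_forall_eventually_map_componentHom_eq (l := l) (u := v)
    (n := n) (δ := δ) (by
      filter_upwards [huv, hvn] with k hk hkn
      exact ⟨hk.2.1, hkn, hdvd (hk.2.2.1 ▸ dvd_mul_left _ _)⟩)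
  refine ⟨_, _, hU.map (mapRingHom (germHom l F)), hV.map (mapRingHom (germHom l F)), ?_,
    by rwa [hV.natDegree_map, hVn]⟩
  rw [← Polynomial.map_mul, ← sub_eq_zero, ← Polynomial.map_sub]
  by_contra hne
  obtain ⟨k, hk, hku, hkv, hkuv⟩ := ((eventually_map_mapRingHom_componentHom_ne_zero hne).and
    (hUu.and (hVv.and huv))).exists
  exact hk (by rw [Polynomial.map_sub, Polynomial.map_mul, hku, hkv, hkuv.2.2.1, sub_self])

lemma eventually_irreducible {P : (ι → F)[X][Y]} (hP : P.Monic)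
    (hirr : Irreducible (P.map (mapRingHom (germHom l F)))) :
    ∀ᶠ k in l, Irreducible (P.map (mapRingHom (componentHom F k))) := by
  rw [(hP.map _).irreducible_iff_natDegree', hP.natDegree_map] at hirr
  have hP1 : P ≠ 1 := fun h => hirr.1 (by rw [h, Polynomial.map_one])
  by_contra hred
  rw [← Ultrafilter.eventually_not] at hred
  have hfactor : ∀ᶠ k in l, ∃ uv : F[X][Y] × F[X][Y], uv.1.Monic ∧ uv.2.Monic ∧
      uv.1 * uv.2 = P.map (mapRingHom (componentHom F k)) ∧
      uv.2.natDegree ∈ Finset.Ioc 0 (P.natDegree / 2) := by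
    filter_upwards [hred] with k hk
    rw [(hP.map _).irreducible_iff_natDegree', hP.natDegree_map] at hk
    push Not at hk
    obtain ⟨u, v, hu, hv, huv, hn⟩ := hk fun h => hP1 <| hP.natDegree_eq_zero.1 <| by
      rw [← hP.natDegree_map (mapRingHom (componentHom F k)), h, natDegree_one]
    exact ⟨(u, v), hu, hv, huv, hn⟩
  obtain ⟨uv, huv⟩ := hfactor.choice
  obtain ⟨U, V, hU, hV, hUV, hn⟩ := exists_monic_mul_eq_map_germHom hP huv
  exact hirr.2 U V hU hV hUV hn

instance [IsAlgClosed F] : IsAlgClosed (Ultrapower l F) := by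
  have : Nonempty ι := l.neBot.nonempty
  refine IsAlgClosed.of_exists_root _ fun P hP hirr => ?_
  obtain ⟨Q, rfl, hdeg, hQ⟩ := lifts_and_natDegree_eq_and_monic
    ((mem_lifts P).2 (Polynomial.map_surjective (germHom l F) germHom_surjective P)) hP
  have hroot (k : ι) : ∃ x, (Q.map (componentHom F k)).eval x = 0 := by
    refine IsAlgClosed.exists_root _ ?_
    rw [hQ.degree_map, degree_eq_natDegree hQ.ne_zero, hdeg]
    exact_mod_cast hirr.natDegree_pos.ne'
  choose x hx using hroot
  refine ⟨germHom l F x, ?_⟩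
  rw [eval_map_apply, germHom_eq_zero_iff]
  exact Eventually.of_forall fun k =>
    (eval_map_apply (f := componentHom F k) (x := x)).symm.trans (hx k)

instance (p : ℕ) [CharP F p] : CharP (Ultrapower l F) p :=
  have : Nonempty ι := l.neBot.nonempty
  charP_of_injective_ringHom (f := (germHom l F).comp (Pi.constRingHom ι F)) (RingHom.injective _) p

end Ultrapower

section NonstandardFrobenius

variable {ι : Type*} {l : Ultrafilter ι} {F : Type*} [Field F] (p : ℕ) [Fact p.Prime] [CharP F p]

/-- The `p ^ e`-power Frobenius of the ultrapower, for a nonstandard exponent `e`. -/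
noncomputable def nonstandardFrobenius (e : ι → ℕ) : Ultrapower l F →+* Ultrapower l F where
  toFun := Germ.map₂ (fun n x => x ^ p ^ n) (Germ.ofFun e)
  map_one' := congrArg Germ.ofFun (funext fun _ => one_pow _)
  map_zero' := congrArg Germ.ofFun (funext fun _ =>
    zero_pow (pow_ne_zero _ (Fact.out : p.Prime).ne_zero))
  map_mul' x y := Germ.inductionOn₂ x y fun _ _ =>
    congrArg Germ.ofFun (funext fun _ => mul_pow _ _ _)
  map_add' x y := Germ.inductionOn₂ x y fun _ _ =>
    congrArg Germ.ofFun (funext fun _ => _root_.add_pow_char_pow _ _ _ _)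

lemma nonstandardFrobenius_germHom (e : ι → ℕ) (x : ι → F) :
    nonstandardFrobenius p e (germHom l F x) = germHom l F fun k => x k ^ p ^ e k :=
  rfl

lemma isTwistedPoint_nonstandardFrobenius_iff {e : ι → ℕ} {f h : (ι → F)[X][Y]} {D : (ι → F)[X]}
    {a b : ι → F} :
    IsTwistedPoint (nonstandardFrobenius (l := l) p e) (f.map (mapRingHom (germHom l F)))
        (D.map (germHom l F)) (h.map (mapRingHom (germHom l F))) (germHom l F a) (germHom l F b) ↔
      ∀ᶠ k in l, IsTwistedPoint (· ^ p ^ e k) (f.map (mapRingHom (componentHom F k)))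
        (D.map (componentHom F k)) (h.map (mapRingHom (componentHom F k))) (a k) (b k) := by
  have heval (k : ι) : (D.map (componentHom F k)).eval (a k) = D.eval a k :=
    eval_map_apply (f := componentHom F k) (x := a)
  have hevalEval (g : (ι → F)[X][Y]) (k : ι) :
      (g.map (mapRingHom (componentHom F k))).evalEval (a k) (b k) = g.evalEval a b k :=
    map_mapRingHom_evalEval (componentHom F k) g a b
  simp only [isTwistedPoint_iff, nonstandardFrobenius_germHom, map_mapRingHom_evalEval,
    eval_map_apply, ← map_mul, germHom_eq_iff, germHom_eq_zero_iff, ← Ultrafilter.eventually_not,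
    ne_eq, ← eventually_and, heval, hevalEval, Pi.mul_apply]

lemma eventually_isTwistCover {κ : Type*} {e : ι → ℕ} {f : (ι → F)[X][Y]} {D : (ι → F)[X]}
    {h : κ → (ι → F)[X][Y]}
    (hcover : IsTwistCover (nonstandardFrobenius (l := l) p e) (f.map (mapRingHom (germHom l F)))
      (D.map (germHom l F)) fun i => (h i).map (mapRingHom (germHom l F))) :
    ∀ᶠ k in l, IsTwistCover (· ^ p ^ e k) (f.map (mapRingHom (componentHom F k)))
      (D.map (componentHom F k)) fun i => (h i).map (mapRingHom (componentHom F k)) := by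
  by_contra hcon
  rw [← Ultrafilter.eventually_not] at hcon
  simp only [IsTwistCover, not_forall, not_exists] at hcon
  obtain ⟨a, ha⟩ := hcon.choice
  obtain ⟨b, hab⟩ := ha.choice
  have hzero (g : (ι → F)[X][Y]) (k : ι) :
      (g.map (mapRingHom (componentHom F k))).evalEval (a k) (b k) = g.evalEval a b k :=
    map_mapRingHom_evalEval (componentHom F k) g a b
  have hval (k : ι) : (D.map (componentHom F k)).eval (a k) = D.eval a k :=
    eval_map_apply (f := componentHom F k) (x := a)
  simp only [hzero, hval] at hab
  obtain ⟨i, hi⟩ := hcover (germHom l F a) (germHom l F b)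
    (by rw [nonstandardFrobenius_germHom, germHom_eq_iff]; exact hab.mono fun k hk => hk.1)
    (by
      rw [map_mapRingHom_evalEval, germHom_eq_zero_iff]
      exact hab.mono fun k hk => hk.2.1)
    (by
      rw [eval_map_apply, ne_eq, germHom_eq_zero_iff, ← Ultrafilter.eventually_not]
      exact hab.mono fun k hk => hk.2.2.1)
  obtain ⟨k, hk, hk'⟩ := (((isTwistedPoint_nonstandardFrobenius_iff p).1 hi).and hab).exists
  exact hk'.2.2.2 i hk

/-- Each of the `d` functions of a twist cover of an irreducible curve of degree `d` occurs. This
is what is left of the point count in a nonstandard finite field. -/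
def HasTwistedPoints {K : Type*} [CommRing K] (σ : K → K) : Prop :=
  ∀ d, ∀ f : K[X][Y], f.Monic → f.natDegree = d → Irreducible f → derivative f ≠ 0 →
    ∀ D : K[X], D ≠ 0 → ∀ h : Fin d → K[X][Y], IsTwistCover σ f D h →
      ∀ i, ∃ a b, IsTwistedPoint σ f D (h i) a b

theorem hasTwistedPoints_nonstandardFrobenius [IsAlgClosed F] {e : ι → ℕ}
    (he : Tendsto e l atTop) : HasTwistedPoints (nonstandardFrobenius (l := l) (F := F) p e) := by
  intro d f hf hd hirr hder D hD h hcover i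
  obtain ⟨f, hfm, rfl⟩ := exists_monic_map_germHom_eq hf
  obtain ⟨D, rfl⟩ := Polynomial.map_surjective _ germHom_surjective D
  choose h' hh' using fun i => Polynomial.map_surjective (mapRingHom (germHom l F))
    (Polynomial.map_surjective _ germHom_surjective) (h i)
  obtain rfl : (fun i => (h' i).map (mapRingHom (germHom l F))) = h := funext hh'
  rw [hfm.natDegree_map] at hd
  rw [Polynomial.derivative_map] at hder
  obtain ⟨κ, hκ⟩ := exists_forall_natDegree_coeff_le f
  choose δ hδ using fun i => exists_forall_natDegree_coeff_le (h' i)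
  obtain ⟨Δ, hΔ⟩ : ∃ Δ, D.natDegree ≤ Δ ∧ ∀ i, (h' i).natDegree ≤ Δ ∧ δ i ≤ Δ :=
    ⟨D.natDegree ⊔ Finset.univ.sup fun i => (h' i).natDegree ⊔ δ i, le_sup_left, fun i =>
      sup_le_iff.1 ((Finset.le_sup (f := fun i => (h' i).natDegree ⊔ δ i)
        (Finset.mem_univ i)).trans le_sup_right)⟩
  obtain ⟨e₀, he₀⟩ := exists_isTwistedPoint_of_isTwistCover F p d κ Δ
  have hpoint : ∀ᶠ k in l, ∃ a b, IsTwistedPoint (· ^ p ^ e k)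
      (f.map (mapRingHom (componentHom F k))) (D.map (componentHom F k))
      ((h' i).map (mapRingHom (componentHom F k))) a b := by
    filter_upwards [he.eventually_ge_atTop e₀, eventually_isTwistCover p hcover,
      eventually_irreducible hfm hirr, eventually_map_mapRingHom_componentHom_ne_zero hder,
      eventually_map_componentHom_ne_zero hD] with k hk hcover hirr hder hD
    refine he₀ (e k) hk _ (hfm.map _) ?_ hirr (natDegree_coeff_map_le _ hκ) ?_ _ hD
      (natDegree_map_le.trans hΔ.1) _ (fun i => natDegree_map_le.trans (hΔ.2 i).1)
      (fun i => natDegree_coeff_map_le _ fun j => (hδ i j).trans (hΔ.2 i).2) hcover i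
    · rw [hfm.natDegree_map, hd]
    · rwa [Polynomial.derivative_map]
  obtain ⟨a, ha⟩ := hpoint.choice
  obtain ⟨b, hb⟩ := ha.choice
  exact ⟨_, _, (isTwistedPoint_nonstandardFrobenius_iff p).2 hb⟩

end NonstandardFrobenius

/-! ### Irreducibility over extensions of an algebraically closed field -/

lemma exists_algHom_of_finiteType (A R : Type*) [Field A] [IsAlgClosed A] [CommRing R]
    [Nontrivial R] [Algebra A R] [Algebra.FiniteType A R] : Nonempty (R →ₐ[A] A) := by
  obtain ⟨m, hm⟩ := Ideal.exists_maximal R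
  let _ : Field (R ⧸ m) := Ideal.Quotient.field m
  have : Algebra.FiniteType A (R ⧸ m) :=
    Algebra.FiniteType.of_surjective (Ideal.Quotient.mkₐ A m) (Ideal.Quotient.mkₐ_surjective A m)
  have : Module.Finite A (R ⧸ m) := finite_of_finite_type_of_isJacobsonRing A (R ⧸ m)
  exact ⟨(IsAlgClosed.lift (M := A) (R := A) (S := R ⧸ m)).comp (Ideal.Quotient.mkₐ A m)⟩

lemma exists_finset_coeff_coeff_mem {R : Type*} [Semiring R] (u : R[X][Y]) :
    ∃ T : Finset R, ∀ i j, (u.coeff i).coeff j ≠ 0 → (u.coeff i).coeff j ∈ T := by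
  classical
  refine ⟨u.coeffs.biUnion coeffs, fun i j h => Finset.mem_biUnion.2 ⟨u.coeff i, ?_, ?_⟩⟩
  · exact coeff_mem_coeffs fun hi => h (by rw [hi, coeff_zero])
  · exact coeff_mem_coeffs h

lemma exists_monic_map_eq_of_coeff_mem {A K : Type*} [CommRing A] [CommRing K] [Algebra A K]
    {R : Subalgebra A K} {u : K[X][Y]} (hu : u.Monic) (h : ∀ i j, (u.coeff i).coeff j ∈ R) :
    ∃ u₀ : R[X][Y], u₀.Monic ∧ u₀.map (mapRingHom (algebraMap R K)) = u := by
  nontriviality K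
  have hlifts : u ∈ lifts (mapRingHom (algebraMap R K)) :=
    (lifts_iff_coeff_lifts _).2 fun i =>
      (mem_lifts _).1 ((lifts_iff_coeff_lifts _).2 fun j => ⟨⟨_, h i j⟩, rfl⟩)
  obtain ⟨u₀, hmap, -, hmonic⟩ := lifts_and_natDegree_eq_and_monic hlifts hu
  exact ⟨u₀, hmonic, hmap⟩

section AlgClosed

variable {A K : Type*} [Field A] [IsAlgClosed A] [Field K] [Algebra A K]

/-- A factorization over `K` lives over a finitely generated `A`-algebra, which has an
`A`-point by the Nullstellensatz. -/
lemma exists_monic_mul_eq_of_map_eq_mul {f : A[X][Y]} {u v : K[X][Y]} (hu : u.Monic)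
    (hv : v.Monic) (huv : u * v = f.map (mapRingHom (algebraMap A K))) :
    ∃ u₀ v₀ : A[X][Y], u₀.Monic ∧ v₀.Monic ∧ u₀ * v₀ = f ∧ v₀.natDegree = v.natDegree := by
  classical
  obtain ⟨T, hT⟩ := exists_finset_coeff_coeff_mem u
  obtain ⟨T', hT'⟩ := exists_finset_coeff_coeff_mem v
  let R := Algebra.adjoin A ((T ∪ T' : Finset K) : Set K)
  have : Algebra.FiniteType A R := R.fg_iff_finiteType.1 ⟨_, rfl⟩
  have mem_R {x : K} (hx : x ≠ 0 → x ∈ T ∪ T') : x ∈ R := by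
    by_cases h : x = 0
    · exact h ▸ R.zero_mem
    · exact Algebra.subset_adjoin (Finset.mem_coe.2 (hx h))
  obtain ⟨u₁, hu₁, rfl⟩ := exists_monic_map_eq_of_coeff_mem (R := R) hu fun i j =>
    mem_R fun h => Finset.mem_union_left _ (hT i j h)
  obtain ⟨v₁, hv₁, rfl⟩ := exists_monic_map_eq_of_coeff_mem (R := R) hv fun i j =>
    mem_R fun h => Finset.mem_union_right _ (hT' i j h)
  have huv₁ : u₁ * v₁ = f.map (mapRingHom (algebraMap A R)) := by
    apply Polynomial.map_injective (mapRingHom (algebraMap R K))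
      (Polynomial.map_injective _ Subtype.val_injective)
    rw [Polynomial.map_mul, huv, Polynomial.map_map, mapRingHom_comp,
      ← IsScalarTower.algebraMap_eq A R K]
  obtain ⟨χ⟩ := exists_algHom_of_finiteType A R
  refine ⟨u₁.map (mapRingHom χ), v₁.map (mapRingHom χ), hu₁.map _, hv₁.map _, ?_, ?_⟩
  · rw [← Polynomial.map_mul, huv₁, Polynomial.map_map, mapRingHom_comp, χ.comp_algebraMap,
      Algebra.algebraMap_self, mapRingHom_id, Polynomial.map_id]
  · rw [hv₁.natDegree_map, hv₁.natDegree_map]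

theorem irreducible_map_algebraMap {f : A[X][Y]} (hf : f.Monic) (hirr : Irreducible f) :
    Irreducible (f.map (mapRingHom (algebraMap A K))) := by
  rw [(hf.map _).irreducible_iff_natDegree', hf.natDegree_map]
  rw [hf.irreducible_iff_natDegree'] at hirr
  refine ⟨fun h => hirr.1 ?_, fun u v hu hv huv => ?_⟩
  · rw [← hf.natDegree_eq_zero, ← hf.natDegree_map (mapRingHom (algebraMap A K)), h, natDegree_one]
  · obtain ⟨u₀, v₀, hu₀, hv₀, huv₀, hdeg⟩ := exists_monic_mul_eq_of_map_eq_mul hu hv huv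
    exact hdeg ▸ hirr.2 u₀ v₀ hu₀ hv₀ huv₀

end AlgClosed

/-! ### Integral generators of Galois extensions -/

section Generator

open scoped IntermediateField

lemma exists_isGalois_pow_mem (p : ℕ) {E K : Type*} [Field E] [Field K] [Algebra E K] [ExpChar E p]
    [Normal E K] (S : Finset K) :
    ∃ L : IntermediateField E K, FiniteDimensional E L ∧ IsGalois E L ∧
      ∃ r, ∀ s ∈ S, s ^ p ^ r ∈ L := by
  classical
  let M := separableClosure E K
  have : ExpChar M p := expChar_of_injective_algebraMap (algebraMap E M).injective p
  choose n hn using fun s : K => IsPurelyInseparable.pow_mem M p s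
  have hM (s : K) (hs : s ∈ S) : s ^ p ^ S.sup n ∈ (algebraMap M K).range := by
    obtain ⟨m, hm⟩ := Nat.exists_eq_add_of_le (Finset.le_sup (f := n) hs)
    rw [hm, pow_add, pow_mul]
    exact pow_mem (hn s) _
  choose! t ht using hM
  let L := FiniteGaloisIntermediateField.adjoin E ((S.image t : Finset M) : Set M)
  let e := IntermediateField.liftAlgEquiv L.toIntermediateField
  refine ⟨IntermediateField.lift L.toIntermediateField, e.toLinearEquiv.finiteDimensional,
    IsGalois.of_algEquiv e, S.sup n, fun s hs => ?_⟩
  exact ⟨t s, FiniteGaloisIntermediateField.subset_adjoin E _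
    (Finset.mem_coe.2 (Finset.mem_image_of_mem t hs)), ht s hs⟩

variable {R E K : Type*} [CommRing R] [IsDomain R] [Field E] [Field K] [Algebra R E]
  [IsFractionRing R E] [Algebra E K] [Algebra R K] [IsScalarTower R E K]

variable (R) in
lemma exists_isIntegral_eq_adjoin (L : IntermediateField E K) [FiniteDimensional E L]
    [Algebra.IsSeparable E L] : ∃ y : K, IsIntegral R y ∧ L = E⟮y⟯ := by
  obtain ⟨y, hy⟩ := Field.exists_primitive_element E L
  have hL : L = E⟮(y : K)⟯ := by
    rw [← IntermediateField.lift_adjoin_simple, hy, IntermediateField.lift_top]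
  have halg : IsAlgebraic R (y : K) :=
    (IsFractionRing.isAlgebraic_iff R E K).2
      ((Algebra.IsAlgebraic.isAlgebraic (R := E) y).algHom L.val)
  obtain ⟨q, hq, hint⟩ := halg.exists_integral_multiple
  refine ⟨q • (y : K), hint, ?_⟩
  rw [← IsScalarTower.algebraMap_smul E q (y : K)]
  refine hL.trans (le_antisymm ?_ ?_) <;> rw [IntermediateField.adjoin_simple_le_iff]
  · have hq' : algebraMap R E q ≠ 0 := by rwa [ne_eq, IsFractionRing.to_map_eq_zero_iff]
    nth_rw 2 [← inv_smul_smul₀ hq' (y : K)]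
    exact IntermediateField.smul_mem _ (IntermediateField.mem_adjoin_simple_self E _)
  · exact IntermediateField.smul_mem _ (IntermediateField.mem_adjoin_simple_self E _)

/-- Clearing denominators in the polynomials over `E` that express elements of `E⟮y⟯`. -/
lemma exists_ne_zero_forall_mul_eq_aeval {y : K} (hy : IsIntegral R y) (T : Finset K)
    (hT : ∀ x ∈ T, x ∈ E⟮y⟯) :
    ∃ D : R, D ≠ 0 ∧ ∀ x ∈ T, ∃ h : R[X], algebraMap R K D * x = aeval y h := by
  classical
  have hone (x : K) (hx : x ∈ T) :
      ∃ D : R, D ≠ 0 ∧ ∃ h : R[X], algebraMap R K D * x = aeval y h := by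
    have hx := hT x hx
    rw [← IntermediateField.mem_toSubalgebra,
      IntermediateField.adjoin_simple_toSubalgebra_of_isAlgebraic hy.tower_top.isAlgebraic,
      Algebra.adjoin_singleton_eq_range_aeval] at hx
    obtain ⟨q, rfl⟩ := hx
    obtain ⟨b, hb, hmap⟩ := IsLocalization.integerNormalization_spec (nonZeroDivisors R) q
    refine ⟨b, nonZeroDivisors.ne_zero hb,
      IsLocalization.integerNormalization (nonZeroDivisors R) q, ?_⟩
    rw [← aeval_map_algebraMap E, hmap, ← IsScalarTower.algebraMap_smul E b q, map_smul,
      Algebra.smul_def, ← IsScalarTower.algebraMap_apply]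
    rfl
  choose! D hD h hh using hone
  refine ⟨∏ x ∈ T, D x, Finset.prod_ne_zero_iff.2 hD, fun x hx => ?_⟩
  obtain ⟨c, hc⟩ := Finset.dvd_prod_of_mem D hx
  refine ⟨C c * h x, ?_⟩
  rw [hc, map_mul, map_mul, aeval_C, ← hh x hx]
  ring

/-- `y` generates a finite Galois extension of `E` containing the powers `s ^ p ^ r`, which is why
its conjugates are polynomials in `y` with coefficients in `E`. -/
lemma exists_isIntegral_separable_forall_mul_eq_aeval (p : ℕ) [ExpChar E p]
    [IsIntegrallyClosed R] [IsAlgClosed K] [Algebra.IsAlgebraic E K] (S : Finset K) :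
    ∃ y : K, IsIntegral R y ∧ ((minpoly R y).map (algebraMap R K)).Separable ∧
      ∃ D : R, D ≠ 0 ∧
        (∀ x, aeval x (minpoly R y) = 0 → ∃ h : R[X], algebraMap R K D * x = aeval y h) ∧
        ∃ r, ∀ s ∈ S, ∃ h : R[X], algebraMap R K D * s ^ p ^ r = aeval y h := by
  classical
  have : IsAlgClosure E K := ⟨inferInstance, inferInstance⟩
  have : Normal E K := IsAlgClosure.normal E K
  have : FaithfulSMul R K := FaithfulSMul.trans R E K
  obtain ⟨L, _, _, r, hr⟩ := exists_isGalois_pow_mem p (E := E) S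
  obtain ⟨y, hy, hL⟩ := exists_isIntegral_eq_adjoin R L
  have hmin : minpoly E y = (minpoly R y).map (algebraMap R E) :=
    minpoly.isIntegrallyClosed_eq_field_fractions E K hy
  have hyL : y ∈ L := hL ▸ IntermediateField.mem_adjoin_simple_self E y
  have hroots (x : K) (hx : aeval x (minpoly R y) = 0) : x ∈ L := by
    have hsplits := Normal.splits (F := E) (K := L) inferInstance ⟨y, hyL⟩
    rw [IntermediateField.minpoly_eq] at hsplits
    refine (IntermediateField.splits_iff_mem (IsAlgClosed.splits _)).1 hsplits x ?_
    rw [mem_rootSet, hmin, aeval_map_algebraMap]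
    exact ⟨((minpoly.monic hy).map _).ne_zero, hx⟩
  obtain ⟨D, hD, hDh⟩ := exists_ne_zero_forall_mul_eq_aeval (E := E) hy
    (((minpoly R y).aroots K).toFinset ∪ S.image (· ^ p ^ r)) fun x hx => by
      rw [← hL]
      rcases Finset.mem_union.1 hx with hx | hx
      · exact hroots x (mem_aroots.1 (Multiset.mem_toFinset.1 hx)).2
      · obtain ⟨s, hs, rfl⟩ := Finset.mem_image.1 hx
        exact hr s hs
  refine ⟨y, hy, ?_, D, hD, fun x hx => hDh x (Finset.mem_union_left _ ?_), r,
    fun s hs => hDh _ (Finset.mem_union_right _ (Finset.mem_image_of_mem (· ^ p ^ r) hs))⟩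
  · have hsep := Algebra.IsSeparable.isSeparable E (⟨y, hyL⟩ : L)
    rw [IsSeparable, IntermediateField.minpoly_eq, hmin] at hsep
    rw [IsScalarTower.algebraMap_eq R E K, ← Polynomial.map_map]
    exact hsep.map
  · exact Multiset.mem_toFinset.2 (mem_aroots.2 ⟨minpoly.ne_zero hy, hx⟩)

end Generator

lemma exists_eq_prod_X_sub_C {K : Type*} [Field K] [IsAlgClosed K] {f : K[X]} (hf : f.Monic)
    {d : ℕ} (hd : f.natDegree = d) : ∃ y : Fin d → K, f = ∏ i, (X - C (y i)) := by
  have hs := IsAlgClosed.splits f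
  obtain ⟨l, hl⟩ := Quotient.exists_rep f.roots
  have hlen : l.length = d := by rw [← hd, hs.natDegree_eq_card_roots, ← hl]; rfl
  subst hlen
  refine ⟨l.get, ?_⟩
  conv_lhs => rw [hs.eq_prod_roots_of_monic hf, ← hl]
  rw [Multiset.quot_mk_to_coe, Multiset.map_coe, Multiset.prod_coe, ← List.prod_ofFn]
  congr 1
  exact List.ext_getElem (by simp) (by simp)

/-! ### Generic points of twisted curves -/

section Evaluation

variable {A K : Type*} [CommRing A] [CommRing K] [Algebra A K]

lemma aevalAeval_eq_eval₂ (a b : K) (P : A[X][Y]) :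
    aevalAeval a b P = P.eval₂ (aeval a : A[X] →ₐ[A] K) b := by
  refine DFunLike.congr_fun (f := ((aevalAeval a b : A[X][Y] →ₐ[A] K) : A[X][Y] →+* K))
    (g := eval₂RingHom (aeval a : A[X] →ₐ[A] K) b) (Polynomial.ringHom_ext (fun q => ?_) ?_) P
  · simp
  · simp

lemma evalEval_map_mapRingHom_algebraMap (a b : K) (P : A[X][Y]) :
    (P.map (mapRingHom (algebraMap A K))).evalEval a b = aevalAeval a b P := by
  have hcomp : (evalRingHom a).comp (mapRingHom (algebraMap A K)) =
      ((aeval a : A[X] →ₐ[A] K) : A[X] →+* K) := by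
    ext <;> simp
  rw [← eval₂_evalRingHom, eval₂_map, hcomp, aevalAeval_eq_eval₂]

lemma map_aevalAeval {σ : K →+* K} {τ : A →+* A}
    (hσ : ∀ c, σ (algebraMap A K c) = algebraMap A K (τ c)) {a : K} (ha : σ a = a) (b : K)
    (P : A[X][Y]) : σ (aevalAeval a b P) = aevalAeval a (σ b) (P.map (mapRingHom τ)) := by
  have hcomp : σ.comp (algebraMap A K) = (algebraMap A K).comp τ := RingHom.ext hσ
  rw [← evalEval_map_mapRingHom_algebraMap, ← evalEval_map_mapRingHom_algebraMap,
    ← map_mapRingHom_evalEval, Polynomial.map_map, Polynomial.map_map, mapRingHom_comp,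
    mapRingHom_comp, hcomp, ha]

end Evaluation

section Generic

open scoped IntermediateField

/-- `(a, y)` is a generic point over `A` of the irreducible curve `f = 0`. -/
structure IsGenericPoint {A K : Type*} [CommRing A] [CommRing K] [Algebra A K] (f : A[X][Y])
    (a y : K) : Prop where
  monic : f.Monic
  irreducible : Irreducible f
  derivative_ne_zero : derivative f ≠ 0
  zero : aevalAeval a y f = 0
  dvd : ∀ P : A[X][Y], aevalAeval a y P = 0 → f ∣ P

lemma exists_isGenericPoint_dvd {A K : Type*} [Field A] [Field K] [Algebra A K] {a y : K}
    (ha : Transcendental A a) {g : A[X][Y]} (hg : g.Monic) (hy : aevalAeval a y g = 0)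
    (hsep : (g.map ((aeval a : A[X] →ₐ[A] K) : A[X] →+* K)).Separable) :
    ∃ f : A[X][Y], IsGenericPoint f a y ∧ f ∣ g := by
  let _ : Algebra A[X] K := (aeval a : A[X] →ₐ[A] K).toRingHom.toAlgebra
  have : FaithfulSMul A[X] K :=
    (faithfulSMul_iff_algebraMap_injective _ _).2 (transcendental_iff_injective.1 ha)
  have haeval (P : A[X][Y]) : aevalAeval a y P = aeval y P := aevalAeval_eq_eval₂ a y P
  have hint : IsIntegral A[X] y := ⟨g, hg, (aevalAeval_eq_eval₂ a y g).symm.trans hy⟩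
  have hdvd (P : A[X][Y]) (hP : aevalAeval a y P = 0) : minpoly A[X] y ∣ P :=
    minpoly.isIntegrallyClosed_dvd hint ((haeval P).symm.trans hP)
  refine ⟨minpoly A[X] y, ⟨minpoly.monic hint, minpoly.irreducible hint, fun hder => ?_,
    (haeval _).trans (minpoly.aeval _ _), hdvd⟩, hdvd g hy⟩
  have hsep' := hsep.of_dvd (Polynomial.map_dvd _ (hdvd g hy))
  have hunit : IsUnit ((minpoly A[X] y).map ((aeval a : A[X] →ₐ[A] K) : A[X] →+* K)) := by
    rwa [Separable, derivative_map, hder, Polynomial.map_zero, isCoprime_zero_right] at hsep'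
  have hdeg := natDegree_eq_zero_of_isUnit hunit
  rw [(minpoly.monic hint).natDegree_map, (minpoly.monic hint).natDegree_eq_zero] at hdeg
  exact minpoly.ne_one A[X] y hdeg

variable {k E K : Type*} [Field k] [Field E] [Field K] [Algebra k E] [Algebra E K] [Algebra k K]
  [IsScalarTower k E K] [IsAlgClosed K] [Algebra.IsAlgebraic E K] {a : E}

lemma exists_separable_forall_mul_eq_aevalAeval (p : ℕ) [ExpChar E p] (hE : k⟮a⟯ = ⊤)
    (ha : Transcendental k a) (S : Finset K) :
    ∃ (y : K) (g : k[X][Y]), g.Monic ∧ aevalAeval (algebraMap E K a) y g = 0 ∧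
      (g.map ((aeval (algebraMap E K a) : k[X] →ₐ[k] K) : k[X] →+* K)).Separable ∧
      ∃ D : k[X], D ≠ 0 ∧
        (∀ z, aevalAeval (algebraMap E K a) z g = 0 →
          ∃ h : k[X][Y], aeval (algebraMap E K a) D * z = aevalAeval (algebraMap E K a) y h) ∧
        ∃ r, ∀ s ∈ S, ∃ h : k[X][Y],
          aeval (algebraMap E K a) D * s ^ p ^ r = aevalAeval (algebraMap E K a) y h := by
  let _ : Algebra k[X] E := (aeval a : k[X] →ₐ[k] E).toRingHom.toAlgebra
  let _ : Algebra k[X] K := (aeval (algebraMap E K a) : k[X] →ₐ[k] K).toRingHom.toAlgebra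
  have : IsScalarTower k[X] E K :=
    IsScalarTower.of_algebraMap_eq fun q => aeval_algebraMap_apply K a q
  have : FaithfulSMul k[X] E :=
    (faithfulSMul_iff_algebraMap_injective _ _).2 (transcendental_iff_injective.1 ha)
  have : IsFractionRing k[X] E := IsFractionRing.of_field _ _ fun z =>
    (IntermediateField.mem_adjoin_simple_iff k z).1 (hE ▸ IntermediateField.mem_top)
  have haeval (z : K) (P : k[X][Y]) : aevalAeval (algebraMap E K a) z P = aeval z P :=
    aevalAeval_eq_eval₂ _ z P
  simp only [haeval]
  obtain ⟨y, hint, hsep, hD⟩ :=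
    exists_isIntegral_separable_forall_mul_eq_aeval (R := k[X]) (E := E) p S
  exact ⟨y, minpoly k[X] y, minpoly.monic hint, minpoly.aeval _ _, hsep, hD⟩

/-- The conjugates of `y` over `k (a)` lie in `k (a, y)` and are permuted by `σ`. -/
lemma exists_isGenericPoint_forall_mul_eq_aevalAeval (p : ℕ) [ExpChar E p] {A : Type*} [Field A]
    [Algebra k A] [Algebra A K] [IsScalarTower k A K] (hE : k⟮a⟯ = ⊤)
    (ha : Transcendental A (algebraMap E K a)) (σ : K →ₐ[E] K) (S : Finset K) :
    ∃ (f : A[X][Y]) (y : K), IsGenericPoint f (algebraMap E K a) y ∧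
      ∃ D : A[X], aeval (algebraMap E K a) D ≠ 0 ∧
        (∀ z, aevalAeval (algebraMap E K a) z f = 0 →
          ∃ h : A[X][Y], aeval (algebraMap E K a) D * σ z = aevalAeval (algebraMap E K a) y h) ∧
        ∃ r, ∀ s ∈ S, ∃ h : A[X][Y],
          aeval (algebraMap E K a) D * s ^ p ^ r = aevalAeval (algebraMap E K a) y h := by
  have ha' : Transcendental k (algebraMap E K a) :=
    ha.restrictScalars (algebraMap k A).injective
  have haeval (z : K) (P : k[X][Y]) : aevalAeval (algebraMap E K a) z
      (P.map (mapRingHom (algebraMap k A))) = aevalAeval (algebraMap E K a) z P := by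
    rw [← evalEval_map_mapRingHom_algebraMap, Polynomial.map_map, mapRingHom_comp,
      ← IsScalarTower.algebraMap_eq, evalEval_map_mapRingHom_algebraMap]
  have hcomp : ((aeval (algebraMap E K a) : A[X] →ₐ[A] K) : A[X] →+* K).comp
      (mapRingHom (algebraMap k A)) = (aeval (algebraMap E K a) : k[X] →ₐ[k] K) :=
    RingHom.ext fun q => aeval_map_algebraMap A _ q
  obtain ⟨y, g, hg, hy, hsep, D, hD, hconj, r, hS⟩ :=
    exists_separable_forall_mul_eq_aevalAeval p hE
      ((transcendental_algebraMap_iff (algebraMap E K).injective).1 ha') S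
  obtain ⟨f, hf, c, hc⟩ := exists_isGenericPoint_dvd (g := g.map (mapRingHom (algebraMap k A)))
    ha (hg.map _) ((haeval y g).trans hy) (by rwa [Polynomial.map_map, hcomp])
  refine ⟨f, y, hf, D.map (algebraMap k A), ?_, fun z hz => ?_, r, fun s hs => ?_⟩
  · rw [aeval_map_algebraMap]
    exact fun h0 => hD (transcendental_iff.1 ha' D h0)
  · have hgz : aevalAeval (algebraMap E K a) z g = 0 := by
      rw [← haeval, hc, map_mul, hz, zero_mul]
    have hgσz : aevalAeval (algebraMap E K a) (σ z) g = 0 := by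
      have hk (x : k) : (σ : K →+* K) (algebraMap k K x) = algebraMap k K (RingHom.id k x) := by
        simp [IsScalarTower.algebraMap_apply k E K]
      simpa [hgz] using (map_aevalAeval hk (σ.commutes a) z g).symm
    obtain ⟨h, hh⟩ := hconj (σ z) hgσz
    refine ⟨h.map (mapRingHom (algebraMap k A)), ?_⟩
    rw [haeval, aeval_map_algebraMap, hh]
  · obtain ⟨h, hh⟩ := hS s hs
    refine ⟨h.map (mapRingHom (algebraMap k A)), ?_⟩
    rw [haeval, aeval_map_algebraMap, hh]

end Generic

/-! ### Partial homomorphisms from generic points -/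

section Specialization

/-- If `D * ρ i = h i` for the roots `ρ i` of `g` under `Θ`, then
`D ^ d * g = ∏ i, (D * X - h i)` under `Θ`, hence also under `Θ'`. -/
lemma exists_mul_eq_of_ker_le {S K K' : Type*} [CommRing S] [CommRing K] [CommRing K'] [IsDomain K']
    {Θ : S →+* K} {Θ' : S →+* K'} (hker : RingHom.ker Θ ≤ RingHom.ker Θ') {d : ℕ} {g : S[X]}
    {ρ : Fin d → K} (hg : g.map Θ = ∏ i, (X - C (ρ i))) {D : S} {h : Fin d → S}
    (hD : ∀ i, Θ D * ρ i = Θ (h i)) {z : K'} (hz : (g.map Θ').eval z = 0) :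
    ∃ i, Θ' D * z = Θ' (h i) := by
  have hΘ : (C D ^ d * g - ∏ i, (C D * X - C (h i))).map Θ = 0 := by
    simp only [Polynomial.map_sub, Polynomial.map_mul, Polynomial.map_pow, Polynomial.map_prod,
      Polynomial.map_C, Polynomial.map_X, hg, ← hD, C_mul, ← mul_sub, Finset.prod_mul_distrib,
      Fin.prod_const, sub_self]
  have hΘ' : (C D ^ d * g - ∏ i, (C D * X - C (h i))).map Θ' = 0 := by
    ext n
    rw [coeff_map, coeff_zero]
    exact hker (by rw [RingHom.mem_ker, ← coeff_map, hΘ, coeff_zero])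
  have hprod : ∏ i, (Θ' D * z - Θ' (h i)) = 0 := by
    simpa [Polynomial.map_prod, eval_prod, hz] using congrArg (Polynomial.eval z) hΘ'
  obtain ⟨i, -, hi⟩ := Finset.prod_eq_zero_iff.1 hprod
  exact ⟨i, sub_eq_zero.1 hi⟩

variable {A K K' : Type*} [CommRing A] [Field K] [Field K'] [Algebra A K] [Algebra A K']
  {σ : K →+* K} {σ' : K' →+* K'} {τ : A →+* A}

lemma IsGenericPoint.aevalAeval_eq_zero {f : A[X][Y]} {a y : K} (hf : IsGenericPoint f a y)
    {a' b' : K'} (hf' : aevalAeval a' b' f = 0) {P : A[X][Y]} (hP : aevalAeval a y P = 0) :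
    aevalAeval a' b' P = 0 := by
  obtain ⟨Q, rfl⟩ := hf.dvd P hP
  rw [map_mul, hf', zero_mul]

lemma map_map_mapRingHom_aeval (hσ : ∀ c, σ (algebraMap A K c) = algebraMap A K (τ c)) {a : K}
    (ha : σ a = a) (f : A[X][Y]) :
    (f.map (mapRingHom τ)).map ((aeval a : A[X] →ₐ[A] K) : A[X] →+* K) =
      (f.map ((aeval a : A[X] →ₐ[A] K) : A[X] →+* K)).map σ := by
  rw [Polynomial.map_map, Polynomial.map_map]
  congr 1
  ext <;> simp [hσ, ha]

lemma aevalAeval_comp_C (a b : K) :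
    ((aevalAeval a b : A[X][Y] →ₐ[A] K) : A[X][Y] →+* K).comp C =
      ((aeval a : A[X] →ₐ[A] K) : A[X] →+* K) := by
  ext <;> simp

lemma IsGenericPoint.isTwistCover {f : A[X][Y]} {a y : K} (hf : IsGenericPoint f a y)
    (hσ : ∀ c, σ (algebraMap A K c) = algebraMap A K (τ c))
    (hσ' : ∀ c, σ' (algebraMap A K' c) = algebraMap A K' (τ c)) (ha : σ a = a) {d : ℕ}
    {ρ : Fin d → K} (hρ : f.map ((aeval a : A[X] →ₐ[A] K) : A[X] →+* K) = ∏ i, (X - C (ρ i)))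
    {D : A[X]} {h : Fin d → A[X][Y]} (hh : ∀ i, aeval a D * σ (ρ i) = aevalAeval a y (h i)) :
    IsTwistCover σ' (f.map (mapRingHom (algebraMap A K'))) (D.map (algebraMap A K'))
      fun i => (h i).map (mapRingHom (algebraMap A K')) := by
  intro a' b' ha' hfb hD
  rw [evalEval_map_mapRingHom_algebraMap] at hfb
  have hroots : ((f.map (mapRingHom τ)).map C).map
      ((aevalAeval a y : A[X][Y] →ₐ[A] K) : A[X][Y] →+* K) = ∏ i, (X - C (σ (ρ i))) := by
    rw [Polynomial.map_map, aevalAeval_comp_C, map_map_mapRingHom_aeval hσ ha, hρ,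
      Polynomial.map_prod]
    simp
  have hzero : (((f.map (mapRingHom τ)).map C).map
      ((aevalAeval a' b' : A[X][Y] →ₐ[A] K') : A[X][Y] →+* K')).eval (σ' b') = 0 := by
    rw [Polynomial.map_map, aevalAeval_comp_C, eval_map, ← map_zero σ', ← hfb]
    exact (aevalAeval_eq_eval₂ _ _ _).symm.trans (map_aevalAeval hσ' ha' b' f).symm
  obtain ⟨i, hi⟩ := exists_mul_eq_of_ker_le (fun P => hf.aevalAeval_eq_zero hfb) hroots
    (D := C D) (h := h) (by simpa using hh) hzero
  refine ⟨i, ha', by rwa [evalEval_map_mapRingHom_algebraMap], hD, ?_⟩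
  rw [evalEval_map_mapRingHom_algebraMap, eval_map_algebraMap]
  simpa using hi

end Specialization

section PartialHom

/-- The subalgebra `W` of `K × K'` is the graph of a homomorphism from a subalgebra of `K` to `K'`
(by linearity, `eq_zero` makes `W` single-valued) that intertwines `σ` and `σ'`. -/
structure IsEquivariantPartialHom {A K K' : Type*} [CommSemiring A] [CommRing K] [CommRing K']
    [Algebra A K] [Algebra A K'] (σ : K → K) (σ' : K' → K') (W : Subalgebra A (K × K')) :
    Prop where
  eq_zero : ∀ z ∈ W, z.1 = 0 → z.2 = 0
  map_mem : ∀ z ∈ W, (σ z.1, σ' z.2) ∈ W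

variable {A K K' : Type*} [CommRing A] [Field K] [Field K'] [Algebra A K] [Algebra A K']

/-- The fractions in `K × K'` with numerator and denominator in `H`. Only the second component of
the denominator has to be nonzero, since the first one then is nonzero for the graph of a partial
homomorphism. -/
def fractions (H : Subalgebra A (K × K')) : Subalgebra A (K × K') where
  carrier := {z | ∃ v ∈ H, v.2 ≠ 0 ∧ v * z ∈ H}
  algebraMap_mem' c := ⟨1, H.one_mem, one_ne_zero, by simpa using H.algebraMap_mem c⟩
  add_mem' := by
    rintro x y ⟨v, hv, hv0, hx⟩ ⟨w, hw, hw0, hy⟩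
    refine ⟨v * w, H.mul_mem hv hw, mul_ne_zero hv0 hw0, ?_⟩
    convert H.add_mem (H.mul_mem hw hx) (H.mul_mem hv hy) using 1
    ring
  mul_mem' := by
    rintro x y ⟨v, hv, hv0, hx⟩ ⟨w, hw, hw0, hy⟩
    refine ⟨v * w, H.mul_mem hv hw, mul_ne_zero hv0 hw0, ?_⟩
    convert H.mul_mem hx hy using 1
    ring

variable {H : Subalgebra A (K × K')}

lemma le_fractions : H ≤ fractions H :=
  fun z hz => ⟨1, H.one_mem, one_ne_zero, by rwa [one_mul]⟩

lemma eq_zero_of_mem_fractions (hH : ∀ z ∈ H, z.1 = 0 → z.2 = 0) {z : K × K'}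
    (hz : z ∈ fractions H) (hz0 : z.1 = 0) : z.2 = 0 := by
  obtain ⟨v, -, hv0, hvz⟩ := hz
  exact (mul_eq_zero.1 (hH _ hvz (by simp [hz0]))).resolve_left hv0

lemma mem_fractions_of_mul_mem {v z : K × K'} (hv : v ∈ fractions H) (hv0 : v.2 ≠ 0)
    (hvz : v * z ∈ fractions H) : z ∈ fractions H := by
  obtain ⟨u, hu, hu0, huv⟩ := hv
  obtain ⟨w, hw, hw0, hwvz⟩ := hvz
  refine ⟨w * (u * v), H.mul_mem hw huv, mul_ne_zero hw0 (mul_ne_zero hu0 hv0), ?_⟩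
  convert H.mul_mem hu hwvz using 1
  ring

lemma map_mem_fractions {σ : K →+* K} {σ' : K' →+* K'}
    (hH : ∀ z ∈ H, (σ z.1, σ' z.2) ∈ fractions H) {z : K × K'} (hz : z ∈ fractions H) :
    (σ z.1, σ' z.2) ∈ fractions H := by
  obtain ⟨v, hv, hv0, hvz⟩ := hz
  refine mem_fractions_of_mul_mem (hH v hv) (by simpa using hv0) ?_
  simpa using hH _ hvz

end PartialHom

section Extension

variable {A K K' : Type*} [CommRing A] [Field K] [Field K'] [Algebra A K] [Algebra A K']
  {σ : K →+* K} {σ' : K' →+* K'} {τ : A →+* A} {f : A[X][Y]} {a y : K} {a' b' : K'} {D : A[X]}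
  {h : A[X][Y]}

lemma aevalAeval_mem_fractions_range (a y : K) (a' b' : K') (P : A[X][Y]) :
    (aevalAeval a y P, aevalAeval a' b' P) ∈
      fractions ((aevalAeval a y).prod (aevalAeval a' b') : A[X][Y] →ₐ[A] K × K').range :=
  le_fractions ⟨P, rfl⟩

lemma mem_fractions_range_of_mul_eq (hD : aeval a' D ≠ 0) {z : K} {z' : K'}
    (hz : aeval a D * z = aevalAeval a y h) (hz' : aeval a' D * z' = aevalAeval a' b' h) :
    (z, z') ∈ fractions ((aevalAeval a y).prod (aevalAeval a' b') :
      A[X][Y] →ₐ[A] K × K').range := by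
  refine mem_fractions_of_mul_mem (v := (aeval a D, aeval a' D)) ?_ hD ?_
  · simpa using aevalAeval_mem_fractions_range a y a' b' (C D)
  · rw [Prod.mk_mul_mk, hz, hz']
    exact aevalAeval_mem_fractions_range a y a' b' h

lemma map_mem_fractions_range (hσ : ∀ c, σ (algebraMap A K c) = algebraMap A K (τ c))
    (hσ' : ∀ c, σ' (algebraMap A K' c) = algebraMap A K' (τ c)) (ha : σ a = a) (ha' : σ' a' = a')
    (hD : aeval a' D ≠ 0) (hy : aeval a D * σ y = aevalAeval a y h)
    (hb' : aeval a' D * σ' b' = aevalAeval a' b' h) {z : K × K'}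
    (hz : z ∈ fractions ((aevalAeval a y).prod (aevalAeval a' b') : A[X][Y] →ₐ[A] K × K').range) :
    (σ z.1, σ' z.2) ∈
      fractions ((aevalAeval a y).prod (aevalAeval a' b') : A[X][Y] →ₐ[A] K × K').range := by
  refine map_mem_fractions ?_ hz
  rintro _ ⟨P, rfl⟩
  have hq (q : A[X]) := aevalAeval_mem_fractions_range a y a' b' (C q)
  change (σ (aevalAeval a y P), σ' (aevalAeval a' b' P)) ∈ _
  rw [map_aevalAeval hσ ha, map_aevalAeval hσ' ha']
  induction P.map (mapRingHom τ) using Polynomial.induction_on' with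
  | add P Q hP hQ => simpa only [map_add, Prod.mk_add_mk] using add_mem hP hQ
  | monomial n q =>
    rw [← C_mul_X_pow_eq_monomial]
    simpa using mul_mem (hq q) (pow_mem (mem_fractions_range_of_mul_eq hD hy hb') n)

end Extension

section Frobenius

/-- The `p ^ r`-th roots of elements of `W`. -/
def iterateFrobeniusComap {A R : Type*} [CommRing A] [CommRing R] [Algebra A R] (p : ℕ)
    [ExpChar R p] (r : ℕ) (W : Subalgebra A R) : Subalgebra A R where
  __ := W.toSubring.comap (iterateFrobenius R p r)
  algebraMap_mem' c := by
    change iterateFrobenius R p r _ ∈ W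
    rw [iterateFrobenius_def]
    exact pow_mem (W.algebraMap_mem c) _

lemma mem_iterateFrobeniusComap {A R : Type*} [CommRing A] [CommRing R] [Algebra A R] {p : ℕ}
    [ExpChar R p] {r : ℕ} {W : Subalgebra A R} {z : R} :
    z ∈ iterateFrobeniusComap p r W ↔ z ^ p ^ r ∈ W := by
  rw [← iterateFrobenius_def]
  rfl

variable {A K K' : Type*} [CommRing A] [Field K] [Field K'] [Algebra A K] [Algebra A K']

lemma IsEquivariantPartialHom.iterateFrobeniusComap {σ : K →+* K} {σ' : K' →+* K'} {p : ℕ}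
    [ExpChar (K × K') p] {W : Subalgebra A (K × K')} (hW : IsEquivariantPartialHom σ σ' W)
    (r : ℕ) : IsEquivariantPartialHom σ σ' (iterateFrobeniusComap p r W) where
  eq_zero z hz hz0 := by
    rw [mem_iterateFrobeniusComap] at hz
    have hpow : z.2 ^ p ^ r = 0 := hW.eq_zero _ hz (by simp [hz0, expChar_ne_zero (K × K') p])
    exact eq_zero_of_pow_eq_zero hpow
  map_mem z hz := by
    rw [mem_iterateFrobeniusComap] at hz ⊢
    simpa using hW.map_mem _ hz

end Frobenius

section Specialization

open scoped IntermediateField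

variable {A K K' : Type*} [Field A] [Field K] [Field K'] [Algebra A K] [Algebra A K']
  [IsAlgClosed A] [IsAlgClosed K] {σ' : K' →+* K'} {τ : A →+* A}

lemma IsGenericPoint.exists_specialization {f : A[X][Y]} {a y : K} (hf : IsGenericPoint f a y)
    {σ : K →+* K} (hσ : ∀ c, σ (algebraMap A K c) = algebraMap A K (τ c))
    (hσ' : ∀ c, σ' (algebraMap A K' c) = algebraMap A K' (τ c)) (hpoints : HasTwistedPoints σ')
    (ha : σ a = a) {D : A[X]} (hD : aeval a D ≠ 0)
    (hconj : ∀ z, aevalAeval a z f = 0 → ∃ h : A[X][Y], aeval a D * σ z = aevalAeval a y h) :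
    ∃ (a' b' : K') (h : A[X][Y]), σ' a' = a' ∧ aevalAeval a' b' f = 0 ∧ aeval a' D ≠ 0 ∧
      aeval a D * σ y = aevalAeval a y h ∧ aeval a' D * σ' b' = aevalAeval a' b' h := by
  obtain ⟨ρ, hρ⟩ := exists_eq_prod_X_sub_C
    (hf.monic.map ((aeval a : A[X] →ₐ[A] K) : A[X] →+* K)) (hf.monic.natDegree_map _)
  have hroot (z : K) : aevalAeval a z f = 0 ↔ ∃ i, z = ρ i := by
    rw [aevalAeval_eq_eval₂]
    change eval₂ ((aeval a : A[X] →ₐ[A] K) : A[X] →+* K) z f = 0 ↔ _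
    rw [← eval_map, hρ, eval_prod, Finset.prod_eq_zero_iff]
    simp [sub_eq_zero]
  choose h hh using fun i => hconj (ρ i) ((hroot _).2 ⟨i, rfl⟩)
  obtain ⟨i, rfl⟩ := (hroot y).1 hf.zero
  have hinj := (algebraMap A K').injective
  have hder : derivative (f.map (mapRingHom (algebraMap A K'))) ≠ 0 := by
    rw [derivative_map, ← coe_mapRingHom]
    exact (map_ne_zero_iff _ (Polynomial.map_injective _ (Polynomial.map_injective _ hinj))).2
      hf.derivative_ne_zero
  have hD' : D.map (algebraMap A K') ≠ 0 := by
    rw [Polynomial.map_ne_zero_iff hinj]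
    rintro rfl
    exact hD (map_zero _)
  obtain ⟨a', b', hab⟩ := hpoints _ _ (hf.monic.map _) (hf.monic.natDegree_map _)
    (irreducible_map_algebraMap hf.monic hf.irreducible) hder _ hD' _
    (hf.isTwistCover hσ hσ' ha hρ hh) i
  have hzero := hab.zero
  have htwist := hab.twist
  have hne := hab.ne_zero
  rw [evalEval_map_mapRingHom_algebraMap] at hzero htwist
  rw [eval_map_algebraMap] at hne htwist
  exact ⟨a', b', h i, hab.fixed, hzero, hne, hh i, htwist⟩

variable {k E : Type*} [Field k] [Field E] [Algebra k E] [Algebra E K] [Algebra k K]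
  [IsScalarTower k E K] [Algebra k A] [IsScalarTower k A K] [IsAlgClosed K']
  [Algebra.IsAlgebraic E K]

theorem exists_isEquivariantPartialHom (p : ℕ) [Fact p.Prime] [CharP A p] {a : E} (hE : k⟮a⟯ = ⊤)
    (ha : Transcendental A (algebraMap E K a)) (σ : K →ₐ[E] K)
    (hσ : ∀ c, σ (algebraMap A K c) = algebraMap A K (τ c))
    (hσ' : ∀ c, σ' (algebraMap A K' c) = algebraMap A K' (τ c)) (hpoints : HasTwistedPoints σ')
    (S : Finset K) :
    ∃ W : Subalgebra A (K × K'), IsEquivariantPartialHom σ σ' W ∧ ∀ s ∈ S, ∃ s', (s, s') ∈ W := by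
  have hcharK : CharP K p := charP_of_injective_algebraMap (algebraMap A K).injective p
  have : CharP E p := (RingHom.charP_iff (algebraMap E K) (algebraMap E K).injective p).2 hcharK
  have : CharP (K × K') p := charP_of_injective_algebraMap (algebraMap A (K × K')).injective p
  have : ExpChar E p := ExpChar.prime Fact.out
  have : ExpChar (K × K') p := ExpChar.prime Fact.out
  obtain ⟨f, y, hf, D, hD, hconj, r, hS⟩ :=
    exists_isGenericPoint_forall_mul_eq_aevalAeval p hE ha σ S
  obtain ⟨a', b', h, ha', hb', hD', hy, htwist⟩ :=
    hf.exists_specialization (σ := σ) hσ hσ' hpoints (σ.commutes a) hD hconj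
  have hW : IsEquivariantPartialHom σ σ' (fractions
      ((aevalAeval (algebraMap E K a) y).prod (aevalAeval a' b') : A[X][Y] →ₐ[A] K × K').range) := {
    eq_zero _ hz hz0 := by
      refine eq_zero_of_mem_fractions ?_ hz hz0
      rintro _ ⟨P, rfl⟩ hP
      exact hf.aevalAeval_eq_zero hb' hP
    map_mem _ hz := map_mem_fractions_range (σ := (σ : K →+* K)) hσ hσ' (σ.commutes a) ha' hD' hy
      htwist hz }
  refine ⟨iterateFrobeniusComap p r _, hW.iterateFrobeniusComap (σ := (σ : K →+* K)) r,
    fun s hs => ?_⟩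
  obtain ⟨P, hP⟩ := hS s hs
  obtain ⟨s', hs'⟩ := IsAlgClosed.exists_pow_nat_eq (aevalAeval a' b' P / aeval a' D)
    (Nat.pow_pos (Fact.out : p.Prime).pos : 0 < p ^ r)
  refine ⟨s', mem_iterateFrobeniusComap.2 (mem_fractions_range_of_mul_eq hD' hP ?_)⟩
  change aeval a' D * s' ^ p ^ r = _
  rw [hs', mul_div_cancel₀ _ hD']

end Specialization

/-! ### Saturation -/

section Saturation

lemma exists_forall_eventually_hyperfilter {I X : Type*} [Countable I] {C : I → ℕ → X → Prop}
    (h : ∀ s : Finset I, ∀ᶠ k in hyperfilter ℕ, ∃ x, ∀ i ∈ s, C i k x) :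
    ∃ x : ℕ → X, ∀ i, ∀ᶠ k in hyperfilter ℕ, C i k (x k) := by
  classical
  obtain ⟨f, hf⟩ := exists_injective_nat I
  let s (n : ℕ) : Finset I := (Finset.range n).preimage f hf.injOn
  have hs {n : ℕ} {i : I} : i ∈ s n ↔ f i < n := by simp [s]
  obtain ⟨k₀, x₀, -⟩ := (h ∅).exists
  -- For each `k`, satisfy the longest satisfiable list of at most `k` constraints.
  have hx (k : ℕ) : ∃ x, ∀ n ≤ k, (∃ y, ∀ i ∈ s n, C i k y) → ∀ i ∈ s n, C i k x := by
    obtain ⟨x, hx⟩ := Nat.findGreatest_spec (P := fun n => ∃ y, ∀ i ∈ s n, C i k y)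
      (Nat.zero_le k) ⟨x₀, by simp [hs]⟩
    refine ⟨x, fun n hn hy i hi => hx i ?_⟩
    have hle := Nat.le_findGreatest (P := fun n => ∃ y, ∀ i ∈ s n, C i k y) hn hy
    exact hs.2 ((hs.1 hi).trans_le hle)
  choose x hx using hx
  refine ⟨x, fun i => ?_⟩
  filter_upwards [h (s (f i + 1)), Nat.hyperfilter_le_atTop (eventually_ge_atTop (f i + 1))]
    with k hk hik
  exact hx k _ hik hk i (hs.2 (Nat.lt_succ_self _))

variable {A B F : Type*} [CommRing A] [CommRing B] [Field F] [Algebra A B]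
  [Algebra A (Ultrapower (hyperfilter ℕ) F)]

lemma exists_forall_eventually_of_isEquivariantPartialHom {p : ℕ} [Fact p.Prime] [CharP F p]
    {e : ℕ → ℕ} {τ : B → B} {v : A → ℕ → F}
    (hv : ∀ c, germHom (hyperfilter ℕ) F (v c) = algebraMap A _ c)
    {W : Subalgebra A (B × Ultrapower (hyperfilter ℕ) F)}
    (hW : IsEquivariantPartialHom τ (nonstandardFrobenius p e) W) (s : Finset (B × B × A))
    (hs : ∀ i ∈ s, (∃ b', (i.1, b') ∈ W) ∧ ∃ b', (i.2.1, b') ∈ W) :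
    ∀ᶠ k in hyperfilter ℕ, ∃ x : B → F, ∀ i ∈ s,
      x (i.1 + i.2.1) = x i.1 + x i.2.1 ∧ x (i.1 * i.2.1) = x i.1 * x i.2.1 ∧
        x (τ i.1) = x i.1 ^ p ^ e k ∧ x (algebraMap A B i.2.2) = v i.2.2 k := by
  classical
  have huniq (b b₁ b₂) (h₁ : (b, b₁) ∈ W) (h₂ : (b, b₂) ∈ W) : b₁ = b₂ :=
    sub_eq_zero.1 (hW.eq_zero _ (W.sub_mem h₁ h₂) (by simp))
  let θ (b : B) : Ultrapower (hyperfilter ℕ) F := if hb : ∃ b', (b, b') ∈ W then hb.choose else 0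
  have hθ {b b'} (hb : (b, b') ∈ W) : θ b = b' := by
    have hex : ∃ b', (b, b') ∈ W := ⟨b', hb⟩
    simp only [θ, dif_pos hex]
    exact huniq b _ _ hex.choose_spec hb
  choose x hx using fun b => germHom_surjective (θ b)
  have hev : ∀ i ∈ s, ∀ᶠ k in hyperfilter ℕ,
      x (i.1 + i.2.1) k = x i.1 k + x i.2.1 k ∧ x (i.1 * i.2.1) k = x i.1 k * x i.2.1 k ∧
        x (τ i.1) k = x i.1 k ^ p ^ e k ∧ x (algebraMap A B i.2.2) k = v i.2.2 k := by
    rintro ⟨b, c, a⟩ hi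
    obtain ⟨⟨b', hb⟩, c', hc⟩ := hs _ hi
    refine .and ?_ (.and ?_ (.and ?_ ?_))
    · refine germHom_eq_iff (y := x b + x c) |>.1 ?_
      rw [map_add, hx, hx, hx, hθ hb, hθ hc, hθ (W.add_mem hb hc)]
    · refine germHom_eq_iff (y := x b * x c) |>.1 ?_
      rw [map_mul, hx, hx, hx, hθ hb, hθ hc, hθ (W.mul_mem hb hc)]
    · refine germHom_eq_iff.1 ?_
      rw [← nonstandardFrobenius_germHom, hx, hx, hθ hb, hθ (hW.map_mem _ hb)]
    · refine germHom_eq_iff.1 ?_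
      rw [hv, hx]
      exact hθ (W.algebraMap_mem a)
  filter_upwards [(eventually_all_finset s).2 hev] with k hk
  exact ⟨fun b => x b k, hk⟩

theorem exists_algHom_ultrapower_of_forall_finset [Countable A] [Countable B] {p : ℕ}
    [Fact p.Prime] [CharP F p] {e : ℕ → ℕ} {τ : B → B}
    (h : ∀ S : Finset B, ∃ W : Subalgebra A (B × Ultrapower (hyperfilter ℕ) F),
      IsEquivariantPartialHom τ (nonstandardFrobenius p e) W ∧ ∀ s ∈ S, ∃ s', (s, s') ∈ W) :
    ∃ g : B →ₐ[A] Ultrapower (hyperfilter ℕ) F,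
      ∀ b, nonstandardFrobenius p e (g b) = g (τ b) := by
  classical
  choose v hv using fun c : A => germHom_surjective (algebraMap A (Ultrapower (hyperfilter ℕ) F) c)
  obtain ⟨x, hx⟩ := exists_forall_eventually_hyperfilter
    fun s : Finset (B × B × A) => by
      obtain ⟨W, hW, hS⟩ := h (s.image Prod.fst ∪ s.image fun i => i.2.1)
      refine exists_forall_eventually_of_isEquivariantPartialHom hv hW s fun i hi => ?_
      exact ⟨hS _ (by grind), hS _ (by grind)⟩
  let g (b : B) : Ultrapower (hyperfilter ℕ) F := germHom _ F fun k => x k b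
  have hadd (b c) : g (b + c) = g b + g c := by
    rw [← map_add, germHom_eq_iff]
    exact (hx (b, c, 0)).mono fun k hk => hk.1
  have hmul (b c) : g (b * c) = g b * g c := by
    rw [← map_mul, germHom_eq_iff]
    exact (hx (b, c, 0)).mono fun k hk => hk.2.1
  have halg (c) : g (algebraMap A B c) = algebraMap A _ c := by
    rw [← hv, germHom_eq_iff]
    exact (hx (0, 0, c)).mono fun k hk => hk.2.2.2
  let φ : B →+* Ultrapower (hyperfilter ℕ) F :=
    { toFun := g
      map_one' := by rw [← map_one (algebraMap A B), halg, map_one]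
      map_mul' := hmul
      map_zero' := by rw [← map_zero (algebraMap A B), halg, map_zero]
      map_add' := hadd }
  refine ⟨⟨φ, halg⟩, fun b => ?_⟩
  change nonstandardFrobenius p e (g b) = g (τ b)
  rw [nonstandardFrobenius_germHom, germHom_eq_iff]
  exact (hx (b, 0, 0)).mono fun k hk => hk.2.2.1.symm

end Saturation

/-! ### Partial isomorphisms -/

section Extension

open IntermediateField

universe u

lemma transcendental_of_notMem_range {Z K : Type*} [Field Z] [IsAlgClosed Z] [CommRing K]
    [IsDomain K] [Algebra Z K] {a : K} (ha : a ∉ Set.range (algebraMap Z K)) :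
    Transcendental Z a := by
  rintro ⟨P, hP, hPa⟩
  refine ha ((IsAlgClosed.splits P).mem_range_of_isRoot hP ?_)
  rwa [Polynomial.IsRoot, Polynomial.eval_map_algebraMap]

lemma adjoin_simple_gen_eq_top {k K : Type*} [Field k] [Field K] [Algebra k K] (a : K) :
    k⟮AdjoinSimple.gen k a⟯ = ⊤ := by
  refine lift_injective k⟮a⟯ ?_
  rw [lift_adjoin_simple, IntermediateField.lift_top, AdjoinSimple.coe_gen]

lemma countable_of_isAlgebraic (k K : Type*) [Field k] [Countable k] [Field K] [Algebra k K]
    [Algebra.IsAlgebraic k K] : Countable K := by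
  rw [← Set.countable_univ_iff]
  exact (Algebraic.countable k K).mono fun x _ => Algebra.IsAlgebraic.isAlgebraic x

lemma countable_adjoin_simple {k K : Type*} [Field k] [Countable k] [Field K] [Algebra k K]
    (a : K) : Countable k⟮a⟯ := by
  rw [← Cardinal.mk_le_aleph0_iff, ← Cardinal.lift_le_aleph0]
  refine (lift_cardinalMk_adjoin_le k {a}).trans (sup_le (sup_le ?_ ?_) le_rfl)
  · exact Cardinal.lift_le_aleph0.2 (Cardinal.mk_le_aleph0_iff.2 inferInstance)
  · simp

theorem exists_algHom_ultrapower {k E Z L F : Type*} [Field k] [Field E] [Field Z] [Field L]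
    [Field F] [Algebra k E] [Algebra E L] [Algebra k L] [IsScalarTower k E L] [Algebra k Z]
    [Algebra Z L] [IsScalarTower k Z L] [Algebra Z (Ultrapower (hyperfilter ℕ) F)]
    [IsAlgClosed Z] [IsAlgClosed L] [IsAlgClosed F] [Algebra.IsAlgebraic E L] [Countable Z]
    [Countable L] {p : ℕ} [Fact p.Prime] [CharP F p] {e : ℕ → ℕ}
    (he : Tendsto e (hyperfilter ℕ) atTop) {a : E} (hE : k⟮a⟯ = ⊤)
    (ha : Transcendental Z (algebraMap E L a)) (σ : L →ₐ[E] L) {τ : Z →+* Z}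
    (hσ : ∀ c, σ (algebraMap Z L c) = algebraMap Z L (τ c))
    (hτ : ∀ c, nonstandardFrobenius p e (algebraMap Z (Ultrapower (hyperfilter ℕ) F) c) =
      algebraMap Z _ (τ c)) :
    ∃ g : L →ₐ[Z] Ultrapower (hyperfilter ℕ) F, ∀ b, nonstandardFrobenius p e (g b) = g (σ b) := by
  have : CharP Z p := (algebraMap Z (Ultrapower (hyperfilter ℕ) F)).charP
    (algebraMap Z _).injective p
  exact exists_algHom_ultrapower_of_forall_finset fun S =>
    exists_isEquivariantPartialHom p hE ha σ hσ hτ (hasTwistedPoints_nonstandardFrobenius p he) S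

lemma exists_algHom_algebraicClosure_forall_coe_eq {E K : Type*} [Field E] [Field K] [Algebra E K]
    (σ : K →ₐ[E] K) :
    ∃ σL : algebraicClosure E K →ₐ[E] algebraicClosure E K, ∀ z, (σL z : K) = σ z :=
  ⟨(σ.comp (algebraicClosure E K).val).codRestrict _ fun z =>
    (map_mem_algebraicClosure_iff σ).2 z.2, fun _ => rfl⟩

lemma map_eq_self_of_mem_adjoin_simple {k K : Type*} [Field k] [Field K] [Algebra k K] {a : K}
    {σ : K →ₐ[k] K} (ha : σ a = a) (c : k⟮a⟯) : σ c = c :=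
  have hfix : σ.comp k⟮a⟯.val = k⟮a⟯.val := algHom_ext_of_eq_adjoin k rfl (by simpa using ha)
  DFunLike.congr_fun hfix c

/-- A partial isomorphism between the difference fields `(K, σ)` and `(K', σ')`: a countable
algebraically closed difference field embedded in both, on which the endomorphism fixes a subfield
over which it is algebraic. -/
structure PartialIso {K K' : Type u} [Field K] [Field K'] (σ : K →+* K) (σ' : K' →+* K') where
  /-- A subfield fixed by the endomorphism. -/
  base : Type u
  /-- The field embedded in both sides. -/
  carrier : Type u
  [fieldBase : Field base]
  [fieldCarrier : Field carrier]
  [algebra : Algebra base carrier]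
  [isAlgClosed : IsAlgClosed carrier]
  [isAlgebraic : Algebra.IsAlgebraic base carrier]
  [countable : Countable base]
  /-- The common restriction of `σ` and `σ'`. -/
  endo : carrier →ₐ[base] carrier
  /-- The embedding into `K`. -/
  fst : carrier →+* K
  /-- The embedding into `K'`. -/
  snd : carrier →+* K'
  map_fst : ∀ z, σ (fst z) = fst (endo z)
  map_snd : ∀ z, σ' (snd z) = snd (endo z)

namespace PartialIso

attribute [instance] fieldBase fieldCarrier algebra isAlgClosed isAlgebraic countable

variable {K K' : Type u} [Field K] [Field K'] {σ : K →+* K} {σ' : K' →+* K'}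

/-- The partial isomorphism with its two sides exchanged. -/
def symm (P : PartialIso σ σ') : PartialIso σ' σ where
  base := P.base
  carrier := P.carrier
  endo := P.endo
  fst := P.snd
  snd := P.fst
  map_fst := P.map_snd
  map_snd := P.map_fst

/-- The graph of the partial isomorphism, as a relation between `K` and `K'`. -/
def Rel (P : PartialIso σ σ') (x : K) (x' : K') : Prop :=
  ∃ z, P.fst z = x ∧ P.snd z = x'

lemma symm_rel_iff {P : PartialIso σ σ'} {x : K} {x' : K'} : P.symm.Rel x' x ↔ P.Rel x x' :=
  exists_congr fun _ => and_comm

variable {F : Type u} [Field F] [IsAlgClosed F] {p : ℕ} [Fact p.Prime] [CharP F p] {e : ℕ → ℕ}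

theorem exists_extension_of_notMem_range [IsAlgClosed K]
    (he : Tendsto e (hyperfilter ℕ) atTop)
    (P : PartialIso σ (nonstandardFrobenius (l := hyperfilter ℕ) (F := F) p e)) {a : K}
    (ha : a ∉ Set.range P.fst) (haσ : σ a = a) :
    ∃ Q : PartialIso σ (nonstandardFrobenius (l := hyperfilter ℕ) (F := F) p e),
      (∀ x x', P.Rel x x' → Q.Rel x x') ∧ ∃ a', Q.Rel a a' := by
  let _ : Algebra P.carrier K := P.fst.toAlgebra
  let _ : Algebra P.carrier (Ultrapower (hyperfilter ℕ) F) := P.snd.toAlgebra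
  let _ : Algebra P.base K := (P.fst.comp (algebraMap P.base P.carrier)).toAlgebra
  have : IsScalarTower P.base P.carrier K := .of_algebraMap_eq fun _ => rfl
  let E := P.base⟮a⟯
  let L := algebraicClosure E K
  have hL (z : P.carrier) : P.fst z ∈ L := by
    have hz : IsAlgebraic P.base (algebraMap P.carrier K z) :=
      (Algebra.IsAlgebraic.isAlgebraic z).algebraMap
    exact mem_algebraicClosure_iff.2 (hz.tower_top E)
  let _ : Algebra P.carrier L := (P.fst.codRestrict L hL).toAlgebra
  have : IsScalarTower P.base P.carrier L := .of_algebraMap_eq fun _ => rfl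
  have : IsScalarTower P.carrier L K := .of_algebraMap_eq fun _ => rfl
  have : Countable P.carrier := countable_of_isAlgebraic P.base P.carrier
  have : Countable E := countable_adjoin_simple a
  have : Countable L := countable_of_isAlgebraic E L
  have : IsAlgClosed L := (algebraicClosure.isAlgClosure E K).1
  have haZ : Transcendental P.carrier (algebraMap E L (AdjoinSimple.gen P.base a)) :=
    (transcendental_algebraMap_iff (algebraMap L K).injective).1 (transcendental_of_notMem_range ha)
  let σk : K →ₐ[P.base] K :=
    ⟨σ, fun c => (P.map_fst _).trans (congrArg P.fst (P.endo.commutes c))⟩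
  obtain ⟨σL, hσL⟩ := exists_algHom_algebraicClosure_forall_coe_eq
    (⟨σ, map_eq_self_of_mem_adjoin_simple (σ := σk) haσ⟩ : K →ₐ[E] K)
  obtain ⟨g, hg⟩ := exists_algHom_ultrapower he (adjoin_simple_gen_eq_top a) haZ σL
    (τ := P.endo) (fun c => Subtype.ext ((hσL _).trans (P.map_fst c))) P.map_snd
  let Q : PartialIso σ (nonstandardFrobenius (l := hyperfilter ℕ) (F := F) p e) :=
    { base := E
      carrier := L
      endo := σL
      fst := algebraMap L K
      snd := g
      map_fst := fun z => (hσL z).symm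
      map_snd := hg }
  refine ⟨Q, ?_, _, algebraMap E L (AdjoinSimple.gen P.base a), rfl, rfl⟩
  rintro _ _ ⟨z, rfl, rfl⟩
  exact ⟨algebraMap P.carrier L z, rfl, g.commutes z⟩

theorem exists_extension [IsAlgClosed K] (he : Tendsto e (hyperfilter ℕ) atTop)
    (P : PartialIso σ (nonstandardFrobenius (l := hyperfilter ℕ) (F := F) p e)) {a : K}
    (ha : σ a = a) :
    ∃ Q : PartialIso σ (nonstandardFrobenius (l := hyperfilter ℕ) (F := F) p e),
      (∀ x x', P.Rel x x' → Q.Rel x x') ∧ ∃ a', Q.Rel a a' := by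
  by_cases hmem : a ∈ Set.range P.fst
  · obtain ⟨z, rfl⟩ := hmem
    exact ⟨P, fun _ _ => id, P.snd z, z, rfl, rfl⟩
  · exact P.exists_extension_of_notMem_range he hmem ha

end PartialIso

end Extension

section Base

open Function

lemma exists_pow_natCard_pow_eq_self (k : Type*) {K : Type*} [Field k] [Finite k] [Field K]
    [Algebra k K] {x : K} (hx : IsAlgebraic k x) : ∃ n, 0 < n ∧ x ^ Nat.card k ^ n = x := by
  have := IntermediateField.adjoin.finiteDimensional hx.isIntegral
  let L := IntermediateField.adjoin k {x}
  have : Finite L := Module.finite_of_finite k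
  let _ : Fintype L := Fintype.ofFinite L
  have h := FiniteField.pow_card (IntermediateField.AdjoinSimple.gen k x : L)
  rw [← Nat.card_eq_fintype_card, Module.natCard_eq_pow_finrank (K := k)] at h
  exact ⟨_, Module.finrank_pos, congrArg Subtype.val h⟩

lemma pow_pow_eq_of_modEq {M : Type*} [Monoid M] {x : M} {q n a b : ℕ} (hx : x ^ q ^ n = x)
    (hab : a ≡ b [MOD n]) : x ^ q ^ a = x ^ q ^ b := by
  have hper : IsPeriodicPt (fun y : M => y ^ q) n x := by
    rwa [IsPeriodicPt, IsFixedPt, pow_iterate]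
  have := hper.iterate_mod_apply a
  rw [hab, hper.iterate_mod_apply b] at this
  simpa only [pow_iterate] using this.symm

lemma nonstandardFrobenius_eq_of_forall_eventually_modEq {ι F : Type*} {l : Ultrafilter ι}
    [Field F] {p : ℕ} [Fact p.Prime] [CharP F p] {e e' : ι → ℕ}
    (h : ∀ n, 0 < n → ∀ᶠ k in l, e k ≡ e' k [MOD n]) {n : ℕ} (hn : 0 < n) {x : Ultrapower l F}
    (hx : x ^ p ^ n = x) : nonstandardFrobenius p e x = nonstandardFrobenius p e' x := by
  obtain ⟨x, rfl⟩ := germHom_surjective x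
  rw [← map_pow, germHom_eq_iff] at hx
  rw [nonstandardFrobenius_germHom, nonstandardFrobenius_germHom, germHom_eq_iff]
  filter_upwards [hx, h n hn] with k hk hmod
  exact pow_pow_eq_of_modEq hk hmod

theorem nonempty_partialIso_of_forall_eventually_modEq {ι F : Type} {l : Ultrafilter ι} [Field F]
    [IsAlgClosed F] {p : ℕ} [Fact p.Prime] [CharP F p] {e e' : ι → ℕ}
    (h : ∀ n, 0 < n → ∀ᶠ k in l, e k ≡ e' k [MOD n]) :
    Nonempty (PartialIso (nonstandardFrobenius (l := l) (F := F) p e)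
      (nonstandardFrobenius (l := l) (F := F) p e')) := by
  let _ : Algebra (ZMod p) (Ultrapower l F) := ZMod.algebra _ p
  let Z := algebraicClosure (ZMod p) (Ultrapower l F)
  let σ := nonstandardFrobenius (l := l) (F := F) p e
  obtain ⟨τ, hτ⟩ := exists_algHom_algebraicClosure_forall_coe_eq
    (⟨σ, RingHom.congr_fun (Subsingleton.elim (σ.comp (algebraMap (ZMod p) _)) _)⟩ :
      Ultrapower l F →ₐ[ZMod p] Ultrapower l F)
  have : IsAlgClosed Z := (algebraicClosure.isAlgClosure (ZMod p) (Ultrapower l F)).1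
  refine ⟨
    { base := ZMod p
      carrier := Z
      endo := τ
      fst := algebraMap Z _
      snd := algebraMap Z _
      map_fst := fun z => (hτ z).symm
      map_snd := fun z => ?_ }⟩
  obtain ⟨n, hn, hz⟩ := exists_pow_natCard_pow_eq_self (ZMod p) (mem_algebraicClosure_iff.1 z.2)
  rw [Nat.card_zmod] at hz
  exact (nonstandardFrobenius_eq_of_forall_eventually_modEq h hn hz).symm.trans (hτ z).symm

end Base

/-! ### Back-and-forth and Łoś's theorem -/

section BackAndForth

open Language

theorem elementarilyEquivalent_of_backAndForth {L : Language} {M N : Type*} [L.Structure M]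
    [L.Structure N] {I : Type*} (r : I → M → N → Prop)
    (atomic : ∀ i {n} {x : Fin n → M} {y : Fin n → N}, (∀ m, r i (x m) (y m)) →
      ∀ {φ : L.BoundedFormula Empty n}, φ.IsAtomic → (φ.Realize default x ↔ φ.Realize default y))
    (forth : ∀ i a, ∃ j, r i ≤ r j ∧ ∃ b, r j a b)
    (back : ∀ i b, ∃ j, r i ≤ r j ∧ ∃ a, r j a b) (i₀ : I) : M ≅[L] N := by
  have hsnoc {i n} {x : Fin n → M} {y : Fin n → N} {a b} (h : ∀ m, r i (x m) (y m))
      (hab : r i a b) (m : Fin (n + 1)) :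
      r i (Fin.snoc (α := fun _ => M) x a m) (Fin.snoc (α := fun _ => N) y b m) := by
    refine Fin.lastCases ?_ (fun m => ?_) m
    · simpa only [Fin.snoc_last] using hab
    · simpa only [Fin.snoc_castSucc] using h m
  have key {n} (φ : L.BoundedFormula Empty n) :
      ∀ i {x y}, (∀ m, r i (x m) (y m)) → (φ.Realize default x ↔ φ.Realize default y) := by
    induction φ with
    | falsum => exact fun _ _ _ _ => Iff.rfl
    | equal t₁ t₂ => exact fun i _ _ h => atomic i h (.equal t₁ t₂)
    | rel R ts => exact fun i _ _ h => atomic i h (.rel R ts)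
    | imp φ ψ ihφ ihψ => exact fun i _ _ h => imp_congr (ihφ i h) (ihψ i h)
    | all φ ih =>
      intro i x y h
      constructor
      · intro hx b
        obtain ⟨j, hij, a, hab⟩ := back i b
        exact (ih j (hsnoc (fun m => hij _ _ (h m)) hab)).1 (hx a)
      · intro hy a
        obtain ⟨j, hij, b, hab⟩ := forth i a
        exact (ih j (hsnoc (fun m => hij _ _ (h m)) hab)).2 (hy b)
  exact elementarilyEquivalent_iff.2 fun φ => key φ i₀ fun m => m.elim0

/-- An injective ring homomorphism as an embedding of structures in the language of rings. -/
def ringEmbedding {R S : Type*} [Ring R] [Ring S] (f : R →+* S) (hf : Function.Injective f) :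
    R ↪[Language.ring] S where
  toFun := f
  inj' := hf
  map_fun' := by
    intro n g v
    cases g <;> simp
  map_rel' := by
    intro n r v
    exact isEmptyElim r

/-- The subfield of elements fixed by an endomorphism. -/
def fixedField {K : Type*} [Field K] (σ : K →+* K) : Subfield K :=
  σ.eqLocusField (RingHom.id K)

lemma mem_fixedField {K : Type*} [Field K] {σ : K →+* K} {x : K} : x ∈ fixedField σ ↔ σ x = x :=
  Iff.rfl

lemma realize_ringHom_comp_iff {R S : Type*} [Ring R] [Ring S] {f : R →+* S}
    (hf : Function.Injective f) {n : ℕ} {φ : Language.ring.BoundedFormula Empty n}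
    (hφ : φ.IsAtomic) (x : Fin n → R) :
    φ.Realize default (f ∘ x) ↔ φ.Realize default x := by
  rw [Subsingleton.elim default (f ∘ default)]
  exact (BoundedFormula.IsQF.of_isAtomic hφ).realize_embedding (ringEmbedding f hf)

end BackAndForth

section FixedField

open Language

universe u

lemma PartialIso.realize_iff {K K' : Type u} [Field K] [Field K'] {σ : K →+* K} {σ' : K' →+* K'}
    (P : PartialIso σ σ') {n : ℕ} {x : Fin n → fixedField σ} {y : Fin n → fixedField σ'}
    (hxy : ∀ i, P.Rel (x i) (y i)) {φ : Language.ring.BoundedFormula Empty n} (hφ : φ.IsAtomic) :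
    φ.Realize default x ↔ φ.Realize default y := by
  choose z hzx hzy using hxy
  have hx : P.fst ∘ z = (fixedField σ).subtype ∘ x := funext hzx
  have hy : P.snd ∘ z = (fixedField σ').subtype ∘ y := funext hzy
  rw [← realize_ringHom_comp_iff Subtype.val_injective (f := (fixedField σ).subtype) hφ, ← hx,
    realize_ringHom_comp_iff P.fst.injective hφ, ← realize_ringHom_comp_iff P.snd.injective hφ, hy,
    realize_ringHom_comp_iff Subtype.val_injective hφ]

variable {F : Type u} [Field F] [IsAlgClosed F] {p : ℕ} [Fact p.Prime] [CharP F p]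

lemma PartialIso.exists_extension_fixedField {K : Type u} [Field K] [IsAlgClosed K] {σ : K →+* K}
    {e : ℕ → ℕ} (he : Tendsto e (hyperfilter ℕ) atTop)
    (P : PartialIso σ (nonstandardFrobenius (l := hyperfilter ℕ) (F := F) p e))
    (a : fixedField σ) :
    ∃ b : fixedField (nonstandardFrobenius (l := hyperfilter ℕ) (F := F) p e),
      ∃ Q : PartialIso σ (nonstandardFrobenius (l := hyperfilter ℕ) (F := F) p e),
        (∀ x y, P.Rel x y → Q.Rel x y) ∧ Q.Rel a b := by
  obtain ⟨Q, hPQ, _, z, hza, rfl⟩ := P.exists_extension he (mem_fixedField.1 a.2)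
  have hz : Q.endo z = z := Q.fst.injective <| by
    rw [← Q.map_fst, hza, mem_fixedField.1 a.2]
  exact ⟨⟨Q.snd z, mem_fixedField.2 ((Q.map_snd z).trans (congrArg Q.snd hz))⟩, Q, hPQ, z, hza, rfl⟩

theorem PartialIso.elementarilyEquivalent {e e' : ℕ → ℕ} (he : Tendsto e (hyperfilter ℕ) atTop)
    (he' : Tendsto e' (hyperfilter ℕ) atTop)
    (P : PartialIso (nonstandardFrobenius (l := hyperfilter ℕ) (F := F) p e)
      (nonstandardFrobenius (l := hyperfilter ℕ) (F := F) p e')) :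
    fixedField (nonstandardFrobenius (l := hyperfilter ℕ) (F := F) p e) ≅[Language.ring]
      fixedField (nonstandardFrobenius (l := hyperfilter ℕ) (F := F) p e') := by
  let σ := nonstandardFrobenius (l := hyperfilter ℕ) (F := F) p e
  let σ' := nonstandardFrobenius (l := hyperfilter ℕ) (F := F) p e'
  refine elementarilyEquivalent_of_backAndForth
    (fun (P : PartialIso σ σ') (x : fixedField σ) (y : fixedField σ') => P.Rel x y)
    (fun P _ _ _ h _ hφ => P.realize_iff h hφ) (fun P a => ?_) (fun P b => ?_) P
  · obtain ⟨b, Q, hPQ, hab⟩ := P.exists_extension_fixedField he' a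
    exact ⟨Q, fun _ _ => hPQ _ _, b, hab⟩
  · obtain ⟨a, Q, hPQ, hab⟩ := P.symm.exists_extension_fixedField he b
    exact ⟨Q.symm, fun _ _ h => symm_rel_iff.2 (hPQ _ _ (symm_rel_iff.2 h)), a,
      symm_rel_iff.2 hab⟩

end FixedField

section Ultraproduct

open Language

variable {ι F : Type*} [Field F] {l : Ultrafilter ι} {M : ι → Type*} [∀ k, Field (M k)]

/-- The map from the ultraproduct of the `M k` to the ultrapower of `F` induced by a family of
homomorphisms `M k →+* F`. -/
def ultraproductMap (l : Ultrafilter ι) (j : ∀ k, M k →+* F) :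
    (l : Filter ι).Product M → Ultrapower l F :=
  Quotient.map' (fun x k => j k (x k)) fun _ _ h => h.mono fun k hk => congrArg (j k) hk

lemma ultraproductMap_coe (j : ∀ k, M k →+* F) (x : ∀ k, M k) :
    ultraproductMap l j (x : (l : Filter ι).Product M) = germHom l F fun k => j k (x k) :=
  rfl

lemma ultraproductMap_injective (j : ∀ k, M k →+* F) :
    Function.Injective (ultraproductMap l j) := by
  rintro ⟨x⟩ ⟨y⟩ h
  exact Quotient.sound' ((germHom_eq_iff.1 h).mono fun k hk => (j k).injective hk)

lemma ultraproductMap_funMap (j : ∀ k, M k →+* F) {n : ℕ} (f : Language.ring.Functions n)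
    (x : Fin n → (l : Filter ι).Product M) :
    ultraproductMap l j (Structure.funMap f x) =
      Structure.funMap f (ultraproductMap l j ∘ x) := by
  choose x hx using fun i => Quotient.exists_rep (x i)
  obtain rfl := funext hx
  refine (congrArg _ (Ultraproduct.funMap_cast f x)).trans ?_
  have hf : (fun k => j k (Structure.funMap f fun i => x i k)) =
      fun k => Structure.funMap f fun i => j k (x i k) :=
    funext fun k => (ringEmbedding (j k) (j k).injective).map_fun f _
  rw [ultraproductMap_coe, hf]
  cases f <;> rfl

lemma range_ultraproductMap {p : ℕ} [Fact p.Prime] [CharP F p] {e : ι → ℕ} {j : ∀ k, M k →+* F}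
    (hj : ∀ᶠ k in l, ∀ x, x ∈ Set.range (j k) ↔ x ^ p ^ e k = x) :
    Set.range (ultraproductMap l j) = fixedField (nonstandardFrobenius (l := l) (F := F) p e) := by
  ext y
  obtain ⟨y, rfl⟩ := germHom_surjective y
  rw [SetLike.mem_coe, mem_fixedField, nonstandardFrobenius_germHom, germHom_eq_iff]
  constructor
  · rintro ⟨⟨x⟩, hx⟩
    filter_upwards [hj, germHom_eq_iff.1 hx] with k hk hxk
    exact (hk _).1 ⟨x k, hxk⟩
  · intro hy
    refine ⟨((fun k => Function.invFun (j k) (y k) : ∀ k, M k) : (l : Filter ι).Product M), ?_⟩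
    rw [ultraproductMap_coe, germHom_eq_iff]
    filter_upwards [hj, hy] with k hk hyk
    exact Function.invFun_eq ((hk _).2 hyk)

theorem fixedField_realize_iff_eventually {p : ℕ} [Fact p.Prime] [CharP F p] {e : ι → ℕ}
    {j : ∀ k, M k →+* F} (hj : ∀ᶠ k in l, ∀ x, x ∈ Set.range (j k) ↔ x ^ p ^ e k = x)
    (θ : Language.ring.Sentence) :
    fixedField (nonstandardFrobenius (l := l) (F := F) p e) ⊨ θ ↔ ∀ᶠ k in l, M k ⊨ θ := by
  let K := fixedField (nonstandardFrobenius (l := l) (F := F) p e)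
  let E : (l : Filter ι).Product M ≃ K :=
    (Equiv.ofInjective _ (ultraproductMap_injective j)).trans (.setCongr (range_ultraproductMap hj))
  let f : (l : Filter ι).Product M ≃[Language.ring] K :=
    { toEquiv := E
      map_fun' := fun g x => Subtype.ext <| (ultraproductMap_funMap j g x).trans
        ((ringEmbedding K.subtype Subtype.val_injective).map_fun g (E ∘ x)).symm
      map_rel' := fun r => isEmptyElim r }
  rw [← Ultraproduct.sentence_realize, StrongHomClass.realize_sentence f]

end Ultraproduct

section GaloisField

lemma exists_ringHom_galoisField_mem_range_iff (F : Type*) [Field F] [IsAlgClosed F] {p : ℕ}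
    [Fact p.Prime] [CharP F p] (n : ℕ) :
    ∃ j : GaloisField p n →+* F, n ≠ 0 → ∀ x, x ∈ Set.range j ↔ x ^ p ^ n = x := by
  let _ : Algebra (ZMod p) F := ZMod.algebra F p
  let j : GaloisField p n →ₐ[ZMod p] F := IsAlgClosed.lift
  refine ⟨j, fun hn x => ⟨?_, fun hx => ?_⟩⟩
  · rintro ⟨x, rfl⟩
    have : Fintype (GaloisField p n) := Fintype.ofFinite _
    have hx := FiniteField.pow_card x
    rw [← Nat.card_eq_fintype_card, GaloisField.card p n hn] at hx
    rw [← map_pow, hx]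
  · have hsplits : ((X ^ p ^ n - X : (ZMod p)[X]).map
        (algebraMap (ZMod p) (GaloisField p n))).Splits :=
      SplittingField.splits (X ^ p ^ n - X : (ZMod p)[X])
    rw [Polynomial.map_sub, Polynomial.map_pow, Polynomial.map_X] at hsplits
    refine hsplits.mem_range_of_isRoot
      (FiniteField.X_pow_card_pow_sub_X_ne_zero _ hn (Fact.out : p.Prime).one_lt) ?_
    simp [IsRoot, hx]

theorem eventually_galoisField_realize_iff_of_forall_eventually_modEq {p : ℕ} [Fact p.Prime]
    {e e' : ℕ → ℕ} (he : Tendsto e (hyperfilter ℕ) atTop) (he' : Tendsto e' (hyperfilter ℕ) atTop)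
    (h : ∀ n, 0 < n → ∀ᶠ k in hyperfilter ℕ, e k ≡ e' k [MOD n]) (θ : Language.ring.Sentence) :
    (∀ᶠ k in hyperfilter ℕ, GaloisField p (e k) ⊨ θ) ↔
      ∀ᶠ k in hyperfilter ℕ, GaloisField p (e' k) ⊨ θ := by
  choose j hj using fun n => exists_ringHom_galoisField_mem_range_iff (p := p)
    (AlgebraicClosure (ZMod p)) n
  obtain ⟨P⟩ := nonempty_partialIso_of_forall_eventually_modEq (F := AlgebraicClosure (ZMod p)) h
  rw [← fixedField_realize_iff_eventually ((he.eventually_ne_atTop 0).mono fun k => hj (e k)),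
    ← fixedField_realize_iff_eventually ((he'.eventually_ne_atTop 0).mono fun k => hj (e' k))]
  exact (P.elementarilyEquivalent he he').realize_sentence θ

end GaloisField

section Periodicity

lemma exists_forall_ge_iff_add_of_forall_eventually_modEq {S : ℕ → Prop}
    (hS : ∀ e e' : ℕ → ℕ, Tendsto e (hyperfilter ℕ) atTop → Tendsto e' (hyperfilter ℕ) atTop →
      (∀ n, 0 < n → ∀ᶠ k in hyperfilter ℕ, e k ≡ e' k [MOD n]) →
        ((∀ᶠ k in hyperfilter ℕ, S (e k)) ↔ ∀ᶠ k in hyperfilter ℕ, S (e' k))) :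
    ∃ N : ℕ, 0 < N ∧ ∃ B : ℕ, 1 ≤ B ∧ ∀ e : ℕ, B ≤ e → (S e ↔ S (e + N)) := by
  by_contra h
  have hcounter (k : ℕ) : ∃ e, k + 1 ≤ e ∧ ¬ (S e ↔ S (e + k.factorial)) := by
    by_contra! hk
    exact h ⟨k.factorial, k.factorial_pos, k + 1, k.succ_pos, hk⟩
  choose e he hne using hcounter
  have he_atTop : Tendsto e (hyperfilter ℕ) atTop :=
    (tendsto_atTop_mono he (tendsto_add_atTop_nat 1)).mono_left Nat.hyperfilter_le_atTop
  have hmod (n : ℕ) (hn : 0 < n) : ∀ᶠ k in hyperfilter ℕ, e k ≡ e k + k.factorial [MOD n] := by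
    filter_upwards [Nat.hyperfilter_le_atTop (eventually_ge_atTop n)] with k hnk
    exact (Nat.modEq_zero_iff_dvd.2 (Nat.dvd_factorial hn hnk)).symm.add_left (e k)
  have hiff := hS e (fun k => e k + k.factorial) he_atTop
    (tendsto_atTop_mono (fun k => Nat.le_add_right (e k) _) he_atTop) hmod
  have hiff_eventually : ∀ᶠ k in hyperfilter ℕ, (S (e k) ↔ S (e k + k.factorial)) := by
    simpa only [iff_def, Ultrafilter.eventually_imp, eventually_and] using hiff
  obtain ⟨k, hk⟩ := hiff_eventually.exists
  exact hne k hk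

end Periodicity

end FiniteFieldPeriodicity

/-- Theorem 3.6 (non-effective content): for a sentence `θ` in the language of rings and a
prime `p`, there exist `N > 0` and `B ≥ 1` such that for all `e ≥ B`, `θ` holds in the field
with `p^e` elements iff it holds in the field with `p^(e+N)` elements. -/
theorem stmt_6 (θ : Language.ring.Sentence) (p : ℕ) [Fact p.Prime] :
    ∃ N : ℕ, 0 < N ∧ ∃ B : ℕ, 1 ≤ B ∧ ∀ e : ℕ, B ≤ e →
      (GaloisField p e ⊨ θ ↔ GaloisField p (e + N) ⊨ θ) := by
  refine FiniteFieldPeriodicity.exists_forall_ge_iff_add_of_forall_eventually_modEq ?_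
  intro e e' he he' hmod
  exact FiniteFieldPeriodicity.eventually_galoisField_realize_iff_of_forall_eventually_modEq
    he he' hmod θ
end

section
/- Let F be a field in which −1 ≠ 1, and let q and m be natural numbers with q ≡ 3 (mod 8) and 4 ∣ m. Then there is no element μ ∈ F such that μ^{q+1} = 1 and μ^m = −1. -/
section NegOnePowers

variable {M : Type*} [Monoid M] [HasDistribNeg M] {x : M} {k m : ℕ}

theorem orderOf_eq_two_pow_succ_of_pow_eq_neg_one (hM : (-1 : M) ≠ 1)
    (hx : x ^ 2 ^ k = -1) : orderOf x = 2 ^ (k + 1) := by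
  have hne : ¬ x ^ 2 ^ k = 1 := hx ▸ hM
  have hone : x ^ 2 ^ (k + 1) = 1 := by rw [pow_succ, pow_mul, hx, neg_one_sq]
  exact orderOf_eq_prime_pow hne hone

theorem two_pow_succ_dvd_orderOf_of_pow_eq_neg_one (hM : (-1 : M) ≠ 1)
    (hm : 2 ^ k ∣ m) (hx : x ^ m = -1) : 2 ^ (k + 1) ∣ orderOf x := by
  obtain ⟨l, rfl⟩ := hm
  have hxl : (x ^ l) ^ 2 ^ k = -1 := by rw [← pow_mul, mul_comm, hx]
  rw [← orderOf_eq_two_pow_succ_of_pow_eq_neg_one hM hxl]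
  exact orderOf_pow_dvd l

theorem stmt_9_general {n : ℕ} (hM : (-1 : M) ≠ 1) (hn : ¬ 2 ^ (k + 1) ∣ n) (hm : 2 ^ k ∣ m) :
    ¬ ∃ μ : M, μ ^ n = 1 ∧ μ ^ m = -1 := by
  rintro ⟨μ, hμn, hμm⟩
  exact hn <| (two_pow_succ_dvd_orderOf_of_pow_eq_neg_one hM hm hμm).trans
    (orderOf_dvd_of_pow_eq_one hμn)

end NegOnePowers

/-- Key computation in Proposition 6.1(iv): if `char F ≠ 2`, `q ≡ 3 (mod 8)` and `4 ∣ m`,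
then there is no `μ ∈ F` with `μ^(q+1) = 1` and `μ^m = −1`. -/
theorem stmt_9 (F : Type) [Field F] (hF : (-1 : F) ≠ 1) (q m : ℕ)
    (hq : q % 8 = 3) (hm : 4 ∣ m) :
    ¬ ∃ μ : F, μ ^ (q + 1) = 1 ∧ μ ^ m = -1 :=
  stmt_9_general (k := 2) hF (by omega) hm
end
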